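/- Let n ≥ 2, let 1 < s ≤ n, and let A ⊆ ℝⁿ be a Borel set with 0 < H^s(A) < ∞. Then there is a Borel set B ⊆ ℝⁿ with dimH B ≤ 1 such that for every x ∈ ℝⁿ \ B, the set of unit vectors e ∈ S^{n−1} for which dimH( A ∩ ( x + e^⊥ ) ) = s − 1 has positive (n−1)-dimensional Hausdorff measure in S^{n−1}, where e^⊥ = { y ∈ ℝⁿ : ⟨y, e⟩ = 0 }. -/

import Mathlib

open MeasureTheory Metric Set
open scoped ENNReal RealInnerProductSpace

/-!
Pass to a compact `K ⊆ A` on which `μ = μH[s].restrict K` has `μ (closedBall x r) ≤ C * r ^ s`, so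
that `μ` has finite `t`-energy for every `t < s`. Give the hyperplanes `⟪y, e⟫ = u` the product of
the Gaussian measure in `e` and Lebesgue measure in `u`; for `μ` this turns energies of order
`τ + 1` into averages over hyperplanes of energies of order `τ`, which bound the dimension of
`K ∩ hyperplane p` from below by `τ` whenever the part of `μ` in a thin slab around the hyperplane
has density bounded away from zero. The bound from above holds for almost every hyperplane by
Fubini.

To pass from almost every hyperplane to almost every hyperplane through `x`, for all `x` outside a
set of dimension at most one, pair a nonnegative square integrable function `g` of hyperplanes with
a measure `ν` of finite `1`-energy: by duality and Cauchy–Schwarz, the mean of `g` over the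
hyperplanes through `x` is `ν`-integrable in `x`. By Frostman's lemma the points where this mean is
infinite form a set of dimension at most one. Applied to `∞` times the indicator of a null set this
handles the almost everywhere statements; applied to a square function of the differences between
slab densities of `μ` of decreasing widths, it shows that the slab densities cannot vanish in the
limit for almost all directions through `x`, unless `x` is exceptional.
-/

/-! ### Dyadic cubes -/

section DyadicCube

/-- The half-open dyadic cube of side length `2 ^ (-k)` with lower corner `2 ^ (-k) • z`. -/
def dyadicCube {n : ℕ} (k : ℕ) (z : Fin n → ℤ) : Set (EuclideanSpace ℝ (Fin n)) :=
  {x | ∀ i, ⌊(2 : ℝ) ^ k * x i⌋ = z i}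

/-- The indices of the dyadic subcubes of half the side length. -/
def dyadicChildren {n : ℕ} (z : Fin n → ℤ) : Finset (Fin n → ℤ) :=
  Fintype.piFinset fun i => {2 * z i, 2 * z i + 1}

variable {n : ℕ}

lemma mem_dyadicChildren {w z : Fin n → ℤ} : w ∈ dyadicChildren z ↔ ∀ i, w i / 2 = z i := by
  simp only [dyadicChildren, Fintype.mem_piFinset, Finset.mem_insert, Finset.mem_singleton]
  exact forall_congr' fun i => by omega

lemma card_dyadicChildren (z : Fin n → ℤ) : (dyadicChildren z).card = 2 ^ n := by
  simp [dyadicChildren, Fintype.card_piFinset]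

lemma disjoint_dyadicChildren {v w : Fin n → ℤ} (h : v ≠ w) :
    Disjoint (dyadicChildren v) (dyadicChildren w) :=
  Finset.disjoint_left.2 fun _ hv hw =>
    h (funext fun i => (mem_dyadicChildren.1 hv i).symm.trans (mem_dyadicChildren.1 hw i))

lemma floor_two_pow_succ_mul_ediv_two (k : ℕ) (a : ℝ) :
    ⌊(2 : ℝ) ^ (k + 1) * a⌋ / 2 = ⌊(2 : ℝ) ^ k * a⌋ := by
  have h := Int.floor_div_natCast ((2 : ℝ) ^ (k + 1) * a) 2
  rw [pow_succ, mul_right_comm, Nat.cast_ofNat, mul_div_cancel_right₀ _ two_ne_zero] at h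
  rw [pow_succ, mul_right_comm, h, Nat.cast_ofNat]

lemma mem_dyadicCube_floor (k : ℕ) (x : EuclideanSpace ℝ (Fin n)) :
    x ∈ dyadicCube k fun i => ⌊(2 : ℝ) ^ k * x i⌋ := fun _ => rfl

lemma iUnion_dyadicCube (k : ℕ) : ⋃ z : Fin n → ℤ, dyadicCube k z = univ :=
  eq_univ_of_forall fun x => mem_iUnion.2 ⟨_, mem_dyadicCube_floor k x⟩

lemma dyadicCube_succ_subset {k : ℕ} {z w : Fin n → ℤ} (h : w ∈ dyadicChildren z) :
    dyadicCube (k + 1) w ⊆ dyadicCube k z := fun x hx i => by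
  rw [← floor_two_pow_succ_mul_ediv_two, hx i, mem_dyadicChildren.1 h i]

lemma exists_mem_dyadicCube_succ {k : ℕ} {z : Fin n → ℤ} {x : EuclideanSpace ℝ (Fin n)}
    (h : x ∈ dyadicCube k z) : ∃ w ∈ dyadicChildren z, x ∈ dyadicCube (k + 1) w :=
  ⟨_, mem_dyadicChildren.2 fun i => by rw [floor_two_pow_succ_mul_ediv_two, h i],
    mem_dyadicCube_floor _ _⟩

lemma dyadicCube_index_unique {k : ℕ} {z w : Fin n → ℤ} {x : EuclideanSpace ℝ (Fin n)}
    (hz : x ∈ dyadicCube k z) (hw : x ∈ dyadicCube k w) : z = w :=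
  funext fun i => (hz i).symm.trans (hw i)

lemma dyadicCube_subset_of_mem {k j : ℕ} (hkj : k ≤ j) {z w : Fin n → ℤ}
    {x : EuclideanSpace ℝ (Fin n)} (hz : x ∈ dyadicCube k z) (hw : x ∈ dyadicCube j w) :
    dyadicCube j w ⊆ dyadicCube k z := by
  induction j, hkj using Nat.le_induction generalizing w with
  | base => rw [dyadicCube_index_unique hz hw]
  | succ j _ ih =>
    have hparent : w ∈ dyadicChildren fun i => w i / 2 := mem_dyadicChildren.2 fun _ => rfl
    exact (dyadicCube_succ_subset hparent).trans (ih (dyadicCube_succ_subset hparent hw))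

lemma measurableSet_dyadicCube (k : ℕ) (z : Fin n → ℤ) : MeasurableSet (dyadicCube k z) := by
  have heq : dyadicCube k z =
      ⋂ i, (fun x : EuclideanSpace ℝ (Fin n) => ⌊(2 : ℝ) ^ k * x i⌋) ⁻¹' {z i} := by
    ext x; simp [dyadicCube]
  rw [heq]
  exact MeasurableSet.iInter fun i =>
    (Int.measurable_floor.comp (by fun_prop)) (measurableSet_singleton _)

lemma abs_sub_le_of_mem_dyadicCube {k : ℕ} {z : Fin n → ℤ} {x y : EuclideanSpace ℝ (Fin n)}
    (hx : x ∈ dyadicCube k z) (hy : y ∈ dyadicCube k z) (i : Fin n) :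
    |x i - y i| ≤ (2 : ℝ)⁻¹ ^ k := by
  have h2 : (0 : ℝ) < 2 ^ k := by positivity
  have h := Int.abs_sub_lt_one_of_floor_eq_floor ((hx i).trans (hy i).symm)
  rw [← mul_sub, abs_mul, abs_of_pos h2] at h
  rw [inv_pow, ← one_div, le_div_iff₀ h2, mul_comm]
  exact h.le

lemma dist_le_of_mem_dyadicCube {k : ℕ} {z : Fin n → ℤ} {x y : EuclideanSpace ℝ (Fin n)}
    (hx : x ∈ dyadicCube k z) (hy : y ∈ dyadicCube k z) : dist x y ≤ n * (2 : ℝ)⁻¹ ^ k := by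
  rw [EuclideanSpace.dist_eq]
  refine Real.sqrt_le_iff.2 ⟨by positivity, ?_⟩
  calc ∑ i, dist (x i) (y i) ^ 2 ≤ ∑ _i : Fin n, ((2 : ℝ)⁻¹ ^ k) ^ 2 :=
        Finset.sum_le_sum fun i _ => by
          rw [Real.dist_eq]; gcongr; exact abs_sub_le_of_mem_dyadicCube hx hy i
    _ = n * ((2 : ℝ)⁻¹ ^ k) ^ 2 := by simp
    _ ≤ (n * (2 : ℝ)⁻¹ ^ k) ^ 2 := by
      rw [mul_pow]
      gcongr
      exact_mod_cast Nat.le_self_pow (by norm_num) n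

lemma ediam_dyadicCube_le (k : ℕ) (w : Fin n → ℤ) :
    ediam (dyadicCube k w) ≤ n * (2 : ℝ≥0∞)⁻¹ ^ k := by
  refine ediam_le fun x hx y hy => ?_
  rw [edist_dist]
  refine (ENNReal.ofReal_le_ofReal (dist_le_of_mem_dyadicCube hx hy)).trans_eq ?_
  rw [ENNReal.ofReal_mul (by positivity), ENNReal.ofReal_pow (by positivity),
    ENNReal.ofReal_inv_of_pos (by norm_num)]
  simp

lemma exists_dyadicCube_subset_of_isOpen {O : Set (EuclideanSpace ℝ (Fin n))} (hO : IsOpen O)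
    {x : EuclideanSpace ℝ (Fin n)} (hx : x ∈ O) :
    ∃ k, ∀ w, x ∈ dyadicCube k w → dyadicCube k w ⊆ O := by
  obtain ⟨r, hr, hrO⟩ := Metric.isOpen_iff.1 hO x hx
  have hlim : Filter.Tendsto (fun k : ℕ => n * (2 : ℝ)⁻¹ ^ k) Filter.atTop (nhds 0) := by
    simpa using (tendsto_pow_atTop_nhds_zero_of_lt_one (r := (2 : ℝ)⁻¹) (by norm_num)
      (by norm_num)).const_mul (n : ℝ)
  obtain ⟨k, hk⟩ := (hlim.eventually (gt_mem_nhds hr)).exists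
  exact ⟨k, fun w hxw y hy => hrO ((dist_le_of_mem_dyadicCube hy hxw).trans_lt hk)⟩

lemma closedBall_subset_iUnion_dyadicCube (x : EuclideanSpace ℝ (Fin n)) (j : ℕ) :
    closedBall x ((2 : ℝ)⁻¹ ^ j) ⊆
      ⋃ w ∈ Fintype.piFinset fun i =>
        Finset.Icc (⌊(2 : ℝ) ^ j * x i⌋ - 1) (⌊(2 : ℝ) ^ j * x i⌋ + 1), dyadicCube j w := by
  intro y hy
  refine mem_iUnion₂.2 ⟨_, Fintype.mem_piFinset.2 fun i => ?_, mem_dyadicCube_floor j y⟩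
  have h2 : (0 : ℝ) < 2 ^ j := by positivity
  have h : |y i - x i| ≤ (2 : ℝ)⁻¹ ^ j := by
    simpa using (PiLp.norm_apply_le (y - x) i).trans (mem_closedBall_iff_norm.1 hy)
  rw [inv_pow, ← one_div, le_div_iff₀ h2, ← abs_of_pos h2, ← abs_mul, abs_le] at h
  have hfloor_le := Int.floor_le ((2 : ℝ) ^ j * x i)
  have hlt_floor := Int.lt_floor_add_one ((2 : ℝ) ^ j * x i)
  rw [Finset.mem_Icc, Int.le_floor, ← Int.lt_add_one_iff, Int.floor_lt]
  push_cast
  constructor <;> linarith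

end DyadicCube

section DyadicWeight

/-- The side length of a dyadic cube of generation `k`, raised to the power `q`. -/
noncomputable def dyadicWeight (q : ℝ) (k : ℕ) : ℝ≥0∞ := (2 : ℝ≥0∞) ^ (-(k * q))

lemma dyadicWeight_ne_zero (q : ℝ) (k : ℕ) : dyadicWeight q k ≠ 0 := by
  simp [dyadicWeight]

lemma dyadicWeight_ne_top (q : ℝ) (k : ℕ) : dyadicWeight q k ≠ ∞ := by
  simp [dyadicWeight]

@[simp] lemma dyadicWeight_zero (q : ℝ) : dyadicWeight q 0 = 1 := by
  simp [dyadicWeight]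

lemma dyadicWeight_eq_pow (q : ℝ) (k : ℕ) : dyadicWeight q k = ((2 : ℝ≥0∞) ^ (-q)) ^ k := by
  rw [dyadicWeight, ← ENNReal.rpow_natCast, ← ENNReal.rpow_mul]
  congr 1; ring

lemma dyadicWeight_natCast (n k : ℕ) : dyadicWeight n k = (2⁻¹ ^ n) ^ k := by
  rw [dyadicWeight_eq_pow, ENNReal.rpow_neg, ENNReal.rpow_natCast, ENNReal.inv_pow]

lemma dyadicWeight_add (q : ℝ) (k j : ℕ) :
    dyadicWeight q (k + j) = dyadicWeight q k * dyadicWeight q j := by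
  simp only [dyadicWeight_eq_pow, pow_add]

lemma dyadicWeight_mul (p q : ℝ) (k : ℕ) :
    dyadicWeight p k * dyadicWeight q k = dyadicWeight (p + q) k := by
  rw [dyadicWeight, dyadicWeight, dyadicWeight, ← ENNReal.rpow_add _ _ (by simp) (by simp)]
  congr 1; ring

lemma dyadicWeight_anti {p q : ℝ} (h : p ≤ q) (k : ℕ) : dyadicWeight q k ≤ dyadicWeight p k :=
  ENNReal.rpow_le_rpow_of_exponent_le (by simp) (by gcongr)

lemma dyadicWeight_eq_rpow (q : ℝ) (k : ℕ) : dyadicWeight q k = ((2 : ℝ≥0∞)⁻¹ ^ k) ^ q := by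
  rw [dyadicWeight, ENNReal.rpow_neg, ENNReal.rpow_mul, ENNReal.rpow_natCast, ← ENNReal.inv_pow,
    ENNReal.inv_rpow]

lemma tsum_dyadicWeight_ne_top {p : ℝ} (hp : 0 < p) : ∑' k, dyadicWeight p k ≠ ∞ := by
  simp only [dyadicWeight_eq_pow, ENNReal.tsum_geometric, ne_eq, ENNReal.inv_eq_top]
  rw [tsub_eq_zero_iff_le, not_le]
  exact ENNReal.rpow_lt_one_of_one_lt_of_neg (by norm_num) (by linarith)

variable {n : ℕ}

lemma volume_dyadicCube (k : ℕ) (z : Fin n → ℤ) :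
    volume (dyadicCube k z) = dyadicWeight n k := by
  have h2 : (0 : ℝ) < 2 ^ k := by positivity
  have heq : dyadicCube k z = (WithLp.ofLp : EuclideanSpace ℝ (Fin n) → _) ⁻¹'
      (univ.pi fun i => Ico ((z i : ℝ) / 2 ^ k) ((z i + 1 : ℝ) / 2 ^ k)) := by
    ext x
    simp only [dyadicCube, mem_ofPred_eq, mem_preimage, mem_univ_pi, mem_Ico, Int.floor_eq_iff]
    refine forall_congr' fun i => ?_
    rw [div_le_iff₀ h2, lt_div_iff₀ h2, mul_comm]
  have hside : ∀ i, ENNReal.ofReal ((z i + 1 : ℝ) / 2 ^ k - (z i : ℝ) / 2 ^ k) = 2⁻¹ ^ k := by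
    intro i
    rw [← sub_div, add_sub_cancel_left, one_div, ENNReal.ofReal_inv_of_pos h2,
      ENNReal.ofReal_pow (by norm_num), ENNReal.inv_pow, ENNReal.ofReal_ofNat]
  rw [heq, (PiLp.volume_preserving_ofLp (Fin n)).measure_preimage
    (MeasurableSet.univ_pi fun i => measurableSet_Ico).nullMeasurableSet, Real.volume_pi_Ico]
  simp only [hside, Finset.prod_const, Finset.card_univ, Fintype.card_fin]
  rw [dyadicWeight_natCast, ← pow_mul, ← pow_mul, mul_comm]

lemma dyadicWeight_le_card_children_mul {q : ℝ} (hq : q ≤ n) (k : ℕ) :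
    dyadicWeight q k ≤ (2 ^ n : ℕ) * dyadicWeight q (k + 1) := by
  have hone : (1 : ℝ≥0∞) = (2 ^ n : ℕ) * dyadicWeight n 1 := by
    rw [dyadicWeight_natCast, pow_one, Nat.cast_pow, Nat.cast_ofNat, ← mul_pow,
      ENNReal.mul_inv_cancel (by simp) (by simp), one_pow]
  rw [dyadicWeight_add, mul_left_comm]
  refine le_mul_of_one_le_right' (hone.trans_le ?_)
  gcongr
  exact dyadicWeight_anti hq 1

lemma ediam_dyadicCube_rpow_le {q : ℝ} (hq : 0 ≤ q) (k : ℕ) (w : Fin n → ℤ) :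
    ediam (dyadicCube k w) ^ q ≤ (n : ℝ≥0∞) ^ q * dyadicWeight q k := by
  rw [dyadicWeight_eq_rpow, ← ENNReal.mul_rpow_of_nonneg _ _ hq]
  gcongr
  exact ediam_dyadicCube_le k w

end DyadicWeight

/-! ### Frostman measures -/

section Frostman

open Classical in
/-- The minimal `q`-dimensional cost of covering, by dyadic cubes, all the dyadic subcubes of
generation `d` relative to a given cube which are contained in `O`. -/
noncomputable def dyadicContent {n : ℕ} (O : Set (EuclideanSpace ℝ (Fin n))) (q : ℝ) :
    ℕ → ℕ → (Fin n → ℤ) → ℝ≥0∞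
  | 0, k, z => if dyadicCube k z ⊆ O then dyadicWeight q k else 0
  | d + 1, k, z =>
    min (dyadicWeight q k) (∑ w ∈ dyadicChildren z, dyadicContent O q d (k + 1) w)

/-- A measure on a set `O`, carried by one dyadic cube, which is at most `q`-dimensional on all
dyadic cubes of the same and of later generations. -/
structure IsDyadicFrostman {n : ℕ} (O : Set (EuclideanSpace ℝ (Fin n))) (q : ℝ) (k : ℕ)
    (z : Fin n → ℤ) (ν : Measure (EuclideanSpace ℝ (Fin n))) : Prop where
  measure_compl : ν Oᶜ = 0
  measure_compl_dyadicCube : ν (dyadicCube k z)ᶜ = 0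
  measure_dyadicCube_le : ∀ j ≥ k, ∀ w, ν (dyadicCube j w) ≤ dyadicWeight q j

variable {n : ℕ} {O : Set (EuclideanSpace ℝ (Fin n))} {q : ℝ}

lemma dyadicContent_le (O : Set (EuclideanSpace ℝ (Fin n))) (q : ℝ) (d k : ℕ) (z : Fin n → ℤ) :
    dyadicContent O q d k z ≤ dyadicWeight q k := by
  cases d with
  | zero => rw [dyadicContent]; split_ifs <;> simp
  | succ d => exact min_le_left _ _

lemma dyadicContent_mono (O : Set (EuclideanSpace ℝ (Fin n))) (hq : q ≤ n) (k : ℕ)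
    (z : Fin n → ℤ) : Monotone fun d => dyadicContent O q d k z := by
  refine monotone_nat_of_le_succ fun d => ?_
  induction d generalizing k z with
  | zero =>
    refine le_min (dyadicContent_le ..) ?_
    by_cases h : dyadicCube k z ⊆ O
    · have hchild : ∀ w ∈ dyadicChildren z,
          dyadicContent O q 0 (k + 1) w = dyadicWeight q (k + 1) := fun w hw => by
        rw [dyadicContent, if_pos ((dyadicCube_succ_subset hw).trans h)]
      rw [dyadicContent, if_pos h, Finset.sum_congr rfl hchild, Finset.sum_const,
        card_dyadicChildren, nsmul_eq_mul]
      exact dyadicWeight_le_card_children_mul hq k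
    · simp [dyadicContent, h]
  | succ d ih => exact min_le_min le_rfl (Finset.sum_le_sum fun w _ => ih _ _)

lemma IsDyadicFrostman.measure_univ_le {k : ℕ} {z : Fin n → ℤ}
    {ν : Measure (EuclideanSpace ℝ (Fin n))} (hν : IsDyadicFrostman O q k z ν) :
    ν univ ≤ dyadicWeight q k := by
  rw [← measure_add_measure_compl (measurableSet_dyadicCube k z), hν.measure_compl_dyadicCube,
    add_zero]
  exact hν.measure_dyadicCube_le k le_rfl z

lemma isDyadicFrostman_zero (k : ℕ) (z : Fin n → ℤ) : IsDyadicFrostman O q k z 0 where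
  measure_compl := by simp
  measure_compl_dyadicCube := by simp
  measure_dyadicCube_le := by simp

lemma isDyadicFrostman_smul_restrict (hq : q ≤ n) {k : ℕ} {z : Fin n → ℤ}
    (h : dyadicCube k z ⊆ O) :
    IsDyadicFrostman O q k z
      ((dyadicWeight q k * (dyadicWeight n k)⁻¹) • volume.restrict (dyadicCube k z)) where
  measure_compl := by
    rw [Measure.smul_apply, Measure.restrict_apply' (measurableSet_dyadicCube k z),
      (disjoint_compl_left_iff_subset.2 h).inter_eq, measure_empty, smul_zero]
  measure_compl_dyadicCube := by
    rw [Measure.smul_apply, Measure.restrict_apply' (measurableSet_dyadicCube k z),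
      compl_inter_self, measure_empty, smul_zero]
  measure_dyadicCube_le j hj w := by
    obtain ⟨i, rfl⟩ := Nat.exists_eq_add_of_le hj
    rw [Measure.smul_apply, smul_eq_mul]
    calc _ ≤ dyadicWeight q k * (dyadicWeight n k)⁻¹ * volume (dyadicCube (k + i) w) := by
          gcongr; exact Measure.restrict_le_self
      _ = dyadicWeight q k * dyadicWeight n i := by
          rw [volume_dyadicCube, dyadicWeight_add, mul_assoc, ← mul_assoc _⁻¹,
            ENNReal.inv_mul_cancel (dyadicWeight_ne_zero _ _) (dyadicWeight_ne_top _ _), one_mul]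
      _ ≤ dyadicWeight q (k + i) := by
          rw [dyadicWeight_add]; gcongr; exact dyadicWeight_anti hq i

lemma sum_measure_dyadicCube_le {k : ℕ} {z : Fin n → ℤ}
    {ν : (Fin n → ℤ) → Measure (EuclideanSpace ℝ (Fin n))}
    (hν : ∀ w ∈ dyadicChildren z, IsDyadicFrostman O q (k + 1) w (ν w)) {j : ℕ} (hj : k + 1 ≤ j)
    (v : Fin n → ℤ) :
    ∑ w ∈ dyadicChildren z, ν w (dyadicCube j v) ≤ dyadicWeight q j := by
  by_cases hv : ∃ w ∈ dyadicChildren z, (dyadicCube (k + 1) w ∩ dyadicCube j v).Nonempty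
  · obtain ⟨w, hw, x, hxw, hxv⟩ := hv
    have hsub := dyadicCube_subset_of_mem hj hxw hxv
    rw [Finset.sum_eq_single_of_mem w hw fun w' hw' hne =>
      measure_mono_null (fun y hy hy' => hne (dyadicCube_index_unique hy' (hsub hy)))
        (hν w' hw').measure_compl_dyadicCube]
    exact (hν w hw).measure_dyadicCube_le j hj v
  · rw [Finset.sum_eq_zero fun w hw =>
      measure_mono_null (fun y hy hy' => hv ⟨w, hw, y, hy', hy⟩)
        (hν w hw).measure_compl_dyadicCube]
    exact zero_le

lemma IsDyadicFrostman.smul_sum {k : ℕ} {z : Fin n → ℤ}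
    {ν : (Fin n → ℤ) → Measure (EuclideanSpace ℝ (Fin n))}
    (hν : ∀ w ∈ dyadicChildren z, IsDyadicFrostman O q (k + 1) w (ν w)) {c : ℝ≥0∞} (hc : c ≤ 1)
    (hmass : c * ∑ w ∈ dyadicChildren z, ν w univ ≤ dyadicWeight q k) :
    IsDyadicFrostman O q k z (c • ∑ w ∈ dyadicChildren z, ν w) where
  measure_compl := by
    rw [Measure.smul_apply, Measure.finsetSum_apply,
      Finset.sum_eq_zero fun w hw => (hν w hw).measure_compl, smul_zero]
  measure_compl_dyadicCube := by
    rw [Measure.smul_apply, Measure.finsetSum_apply, Finset.sum_eq_zero fun w hw =>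
      measure_mono_null (compl_subset_compl.2 (dyadicCube_succ_subset hw))
        (hν w hw).measure_compl_dyadicCube, smul_zero]
  measure_dyadicCube_le j hj w := by
    rw [Measure.smul_apply, Measure.finsetSum_apply, smul_eq_mul]
    rcases hj.eq_or_lt with rfl | hj
    · refine le_trans ?_ hmass
      gcongr
      exact subset_univ _
    · exact (mul_le_of_le_one_left' hc).trans (sum_measure_dyadicCube_le hν hj w)

lemma exists_isDyadicFrostman (O : Set (EuclideanSpace ℝ (Fin n))) (hq : q ≤ n) (d k : ℕ)
    (z : Fin n → ℤ) : ∃ ν, IsDyadicFrostman O q k z ν ∧ ν univ = dyadicContent O q d k z := by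
  induction d generalizing k z with
  | zero =>
    by_cases h : dyadicCube k z ⊆ O
    · refine ⟨_, isDyadicFrostman_smul_restrict hq h, ?_⟩
      simp [dyadicContent, h, volume_dyadicCube, mul_assoc,
        ENNReal.inv_mul_cancel (dyadicWeight_ne_zero _ _) (dyadicWeight_ne_top _ _)]
    · exact ⟨0, isDyadicFrostman_zero k z, by simp [dyadicContent, h]⟩
  | succ d ih =>
    choose ν hν hmass using fun w => ih (k + 1) w
    rw [dyadicContent]
    set S := ∑ w ∈ dyadicChildren z, dyadicContent O q d (k + 1) w
    have hS : ∑ w ∈ dyadicChildren z, ν w univ = S := Finset.sum_congr rfl fun w _ => hmass w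
    have hSum_ne_top : S ≠ ∞ := ENNReal.sum_ne_top.2 fun w _ =>
      ne_top_of_le_ne_top (dyadicWeight_ne_top q (k + 1)) (dyadicContent_le ..)
    rcases eq_or_ne S 0 with hS0 | hS0
    · exact ⟨0, isDyadicFrostman_zero k z, by simp [hS0]⟩
    have hscale : min (dyadicWeight q k) S * S⁻¹ * S = min (dyadicWeight q k) S := by
      rw [mul_assoc, ENNReal.inv_mul_cancel hS0 hSum_ne_top, mul_one]
    refine ⟨(min (dyadicWeight q k) S * S⁻¹) • ∑ w ∈ dyadicChildren z, ν w,
      IsDyadicFrostman.smul_sum (fun w _ => hν w) ?_ ?_, ?_⟩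
    · rw [← ENNReal.mul_inv_cancel hS0 hSum_ne_top]
      gcongr
      exact min_le_right _ _
    · rw [hS, hscale]
      exact min_le_left _ _
    · rw [Measure.smul_apply, Measure.finsetSum_apply, hS, smul_eq_mul, hscale]

end Frostman

section StoppingCubes

/-- The `q`-dimensional cost of covering, by dyadic cubes, all the dyadic subcubes of a given cube
which are contained in `O`. -/
noncomputable def dyadicLimitContent {n : ℕ} (O : Set (EuclideanSpace ℝ (Fin n))) (q : ℝ) (k : ℕ)
    (z : Fin n → ℤ) : ℝ≥0∞ :=
  ⨆ d, dyadicContent O q d k z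

open Classical in
/-- The dyadic cubes of generation `k` below the unit cube `z` none of whose strict ancestors has
full content. -/
noncomputable def activeCubes {n : ℕ} (O : Set (EuclideanSpace ℝ (Fin n))) (q : ℝ)
    (z : Fin n → ℤ) : ℕ → Finset (Fin n → ℤ)
  | 0 => {z}
  | k + 1 =>
    ((activeCubes O q z k).filter fun w => dyadicLimitContent O q k w ≠ dyadicWeight q k).biUnion
      dyadicChildren

open Classical in
/-- The dyadic cubes of generation `k` below the unit cube `z` which have full content and are
maximal with this property: they form an optimal dyadic covering of `O`. -/
noncomputable def stoppingCubes {n : ℕ} (O : Set (EuclideanSpace ℝ (Fin n))) (q : ℝ)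
    (z : Fin n → ℤ) (k : ℕ) : Finset (Fin n → ℤ) :=
  (activeCubes O q z k).filter fun w => dyadicLimitContent O q k w = dyadicWeight q k

variable {n : ℕ} {O : Set (EuclideanSpace ℝ (Fin n))} {q : ℝ}

lemma dyadicLimitContent_eq_min (O : Set (EuclideanSpace ℝ (Fin n))) (hq : q ≤ n) (k : ℕ)
    (z : Fin n → ℤ) :
    dyadicLimitContent O q k z =
      min (dyadicWeight q k) (∑ w ∈ dyadicChildren z, dyadicLimitContent O q (k + 1) w) := by
  have hshift : dyadicLimitContent O q k z = ⨆ d, dyadicContent O q (d + 1) k z :=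
    ((dyadicContent_mono O hq k z).iSup_nat_add 1).symm
  rw [hshift]
  simp only [dyadicContent, dyadicLimitContent]
  rw [ENNReal.finsetSum_iSup_of_monotone fun w => dyadicContent_mono O hq (k + 1) w,
    ← inf_iSup_eq]

lemma dyadicLimitContent_eq_dyadicWeight_of_subset {k : ℕ} {z : Fin n → ℤ}
    (h : dyadicCube k z ⊆ O) : dyadicLimitContent O q k z = dyadicWeight q k :=
  le_antisymm (iSup_le fun d => dyadicContent_le O q d k z)
    (le_iSup_of_le 0 (by rw [dyadicContent, if_pos h]))

lemma exists_mem_activeCubes {z : Fin n → ℤ} {x : EuclideanSpace ℝ (Fin n)}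
    (hxz : x ∈ dyadicCube 0 z) (hx : ∀ k, ∀ w ∈ stoppingCubes O q z k, x ∉ dyadicCube k w) (k : ℕ) :
    ∃ w ∈ activeCubes O q z k, x ∈ dyadicCube k w := by
  induction k with
  | zero => exact ⟨z, by simp [activeCubes], hxz⟩
  | succ k ih =>
    obtain ⟨w, hw, hxw⟩ := ih
    obtain ⟨w', hw', hxw'⟩ := exists_mem_dyadicCube_succ hxw
    refine ⟨w', Finset.mem_biUnion.2 ⟨w, Finset.mem_filter.2 ⟨hw, fun hfull => ?_⟩, hw'⟩, hxw'⟩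
    exact hx k w (Finset.mem_filter.2 ⟨hw, hfull⟩) hxw

lemma inter_dyadicCube_subset_iUnion_stoppingCubes (hO : IsOpen O) (q : ℝ) (z : Fin n → ℤ) :
    O ∩ dyadicCube 0 z ⊆ ⋃ k, ⋃ w ∈ stoppingCubes O q z k, dyadicCube k w := by
  rintro x ⟨hxO, hxz⟩
  by_contra hx
  have hx' : ∀ k, ∀ w ∈ stoppingCubes O q z k, x ∉ dyadicCube k w := fun k w hw hxw =>
    hx (mem_iUnion.2 ⟨k, mem_iUnion₂.2 ⟨w, hw, hxw⟩⟩)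
  obtain ⟨k, hk⟩ := exists_dyadicCube_subset_of_isOpen hO hxO
  obtain ⟨w, hw, hxw⟩ := exists_mem_activeCubes hxz hx' k
  exact hx' k w (Finset.mem_filter.2
    ⟨hw, dyadicLimitContent_eq_dyadicWeight_of_subset (hk w hxw)⟩) hxw

lemma sum_activeCubes_succ_add_le (O : Set (EuclideanSpace ℝ (Fin n))) (hq : q ≤ n)
    (z : Fin n → ℤ) (k : ℕ) :
    ∑ _w ∈ stoppingCubes O q z k, dyadicWeight q k +
        ∑ w ∈ activeCubes O q z (k + 1), dyadicLimitContent O q (k + 1) w ≤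
      ∑ w ∈ activeCubes O q z k, dyadicLimitContent O q k w := by
  classical
  rw [← Finset.sum_filter_add_sum_filter_not (activeCubes O q z k)
    fun w => dyadicLimitContent O q k w = dyadicWeight q k]
  refine add_le_add (Finset.sum_le_sum fun w hw => (Finset.mem_filter.1 hw).2.ge) ?_
  rw [activeCubes, Finset.sum_biUnion fun v _ w _ hvw => disjoint_dyadicChildren hvw]
  refine Finset.sum_le_sum fun w hw => ?_
  have hmin := dyadicLimitContent_eq_min O hq k w
  rcases min_choice (dyadicWeight q k)
    (∑ w' ∈ dyadicChildren w, dyadicLimitContent O q (k + 1) w') with h | h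
  · exact absurd (hmin.trans h) (Finset.mem_filter.1 hw).2
  · exact (hmin.trans h).ge

lemma tsum_stoppingCubes_le (O : Set (EuclideanSpace ℝ (Fin n))) (hq : q ≤ n) (z : Fin n → ℤ) :
    ∑' k, ∑ _w ∈ stoppingCubes O q z k, dyadicWeight q k ≤ dyadicLimitContent O q 0 z := by
  have hpartial : ∀ K, ∑ k ∈ Finset.range K, ∑ _w ∈ stoppingCubes O q z k, dyadicWeight q k +
      ∑ w ∈ activeCubes O q z K, dyadicLimitContent O q K w ≤ dyadicLimitContent O q 0 z := by
    intro K
    induction K with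
    | zero => simp [activeCubes]
    | succ K ih =>
      rw [Finset.sum_range_succ, add_assoc]
      exact (by gcongr; exact sum_activeCubes_succ_add_le O hq z K : _ ≤ _).trans ih
  rw [ENNReal.tsum_eq_iSup_nat]
  exact iSup_le fun K => le_self_add.trans (hpartial K)

end StoppingCubes

section FrostmanCriterion

/-- The measure `ν` has dimension at least `q` in the sense that the balls of radius `r` have
measure at most `C * r ^ q`. It is enough, and more convenient, to ask this for the radii
`2 ^ (-j)`. -/
def HasBallGrowth {X : Type*} [PseudoMetricSpace X] [MeasurableSpace X] (ν : Measure X) (q : ℝ)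
    (C : ℝ≥0∞) : Prop :=
  ∀ x (j : ℕ), ν (closedBall x ((2 : ℝ)⁻¹ ^ j)) ≤ C * dyadicWeight q j

lemma HasBallGrowth.map_isometryEquiv {X Y : Type*} [PseudoMetricSpace X] [PseudoMetricSpace Y]
    [MeasurableSpace X] [BorelSpace X] [MeasurableSpace Y] [BorelSpace Y] {ν : Measure X} {q : ℝ}
    {C : ℝ≥0∞} (hν : HasBallGrowth ν q C) (e : X ≃ᵢ Y) : HasBallGrowth (ν.map e) q C := by
  intro y j
  rw [Measure.map_apply e.continuous.measurable measurableSet_closedBall,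
    IsometryEquiv.preimage_closedBall]
  exact hν _ j

lemma hasBallGrowth_of_forall_dyadicCube_le {n : ℕ} {ν : Measure (EuclideanSpace ℝ (Fin n))}
    {q : ℝ} {C : ℝ≥0∞} (hν : ∀ j w, ν (dyadicCube j w) ≤ C * dyadicWeight q j) :
    HasBallGrowth ν q (3 ^ n * C) := by
  intro x j
  refine (measure_mono (closedBall_subset_iUnion_dyadicCube x j)).trans
    ((measure_biUnion_finset_le _ _).trans ((Finset.sum_le_sum fun w _ => hν j w).trans_eq ?_))
  have hcard : ∀ a : ℤ, (a + 1 + 1 - (a - 1)).toNat = 3 := fun a => by omega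
  rw [Finset.sum_const, Fintype.card_piFinset, nsmul_eq_mul, mul_assoc]
  simp only [Int.card_Icc, hcard, Finset.prod_const, Finset.card_univ, Fintype.card_fin,
    Nat.cast_pow, Nat.cast_ofNat]

lemma hausdorffMeasure_eq_zero_of_forall_exists_cover {X : Type*} [EMetricSpace X]
    [MeasurableSpace X] [BorelSpace X] {q : ℝ} (hq : 0 < q) {S : Set X}
    (H : ∀ ε : ℝ≥0∞, ε ≠ 0 → ∃ (ι : Type) (_ : Countable ι) (t : ι → Set X),
      S ⊆ ⋃ i, t i ∧ ∑' i, ediam (t i) ^ q ≤ ε) : μH[q] S = 0 := by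
  choose ι _ t hSt hsum using fun j : ℕ =>
    H (j : ℝ≥0∞)⁻¹ (ENNReal.inv_ne_zero.2 (ENNReal.natCast_ne_top j))
  have hlim := ENNReal.tendsto_inv_nat_nhds_zero
  have hrad : Filter.Tendsto (fun j : ℕ => (j : ℝ≥0∞)⁻¹ ^ q⁻¹) Filter.atTop (nhds 0) := by
    simpa only [ENNReal.zero_rpow_of_pos (inv_pos.2 hq)] using hlim.ennrpow_const q⁻¹
  have hle := Measure.hausdorffMeasure_le_liminf_tsum q S _ hrad t
    (.of_forall fun j i => (ENNReal.le_rpow_inv_iff hq).2 ((ENNReal.le_tsum i).trans (hsum j)))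
    (.of_forall hSt)
  refine le_antisymm (hle.trans ?_) zero_le
  exact (Filter.liminf_le_liminf (.of_forall hsum)).trans_eq hlim.liminf_eq

lemma hausdorffMeasure_inter_dyadicCube_eq_zero {n : ℕ} {q : ℝ} (hq0 : 0 < q) (hqn : q ≤ n)
    (z : Fin n → ℤ) {S : Set (EuclideanSpace ℝ (Fin n))}
    (H : ∀ ε : ℝ≥0∞, ε ≠ 0 → ∃ O, IsOpen O ∧ S ⊆ O ∧
      ∀ ν, IsDyadicFrostman O q 0 z ν → ν univ ≤ ε) :
    μH[q] (S ∩ dyadicCube 0 z) = 0 := by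
  refine hausdorffMeasure_eq_zero_of_forall_exists_cover hq0 fun ε hε => ?_
  have hntop : (n : ℝ≥0∞) ^ q ≠ ∞ := by finiteness
  obtain ⟨O, hO, hSO, hν⟩ := H (ε / n ^ q) (ENNReal.div_ne_zero.2 ⟨hε, hntop⟩)
  have hcontent : dyadicLimitContent O q 0 z ≤ ε / n ^ q := iSup_le fun d => by
    obtain ⟨ν, hF, hmass⟩ := exists_isDyadicFrostman O hqn d 0 z
    exact hmass ▸ hν ν hF
  refine ⟨Σ k, stoppingCubes O q z k, inferInstance, fun i => dyadicCube i.1 i.2.1, ?_, ?_⟩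
  · rintro x ⟨hxS, hxz⟩
    have hx := inter_dyadicCube_subset_iUnion_stoppingCubes hO q z ⟨hSO hxS, hxz⟩
    simp only [mem_iUnion] at hx ⊢
    obtain ⟨k, w, hw, hxw⟩ := hx
    exact ⟨⟨k, w, hw⟩, hxw⟩
  · calc ∑' i : Σ k, stoppingCubes O q z k, ediam (dyadicCube i.1 i.2.1) ^ q
        ≤ ∑' i : Σ k, stoppingCubes O q z k, n ^ q * dyadicWeight q i.1 :=
          ENNReal.tsum_le_tsum fun i => ediam_dyadicCube_rpow_le hq0.le _ _
      _ = n ^ q * ∑' k, ∑ _w ∈ stoppingCubes O q z k, dyadicWeight q k := by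
          rw [ENNReal.tsum_mul_left, ENNReal.tsum_sigma']
          simp only [tsum_fintype, Finset.sum_const, Finset.card_univ, Fintype.card_coe]
      _ ≤ n ^ q * (ε / n ^ q) := by
          gcongr
          exact (tsum_stoppingCubes_le O hqn z).trans hcontent
      _ ≤ ε := ENNReal.mul_div_le

/-- A form of **Frostman's lemma** that needs no measurability of `S`. -/
lemma hausdorffMeasure_eq_zero_of_forall_hasBallGrowth {E : Type*} [NormedAddCommGroup E]
    [InnerProductSpace ℝ E] [FiniteDimensional ℝ E] [MeasurableSpace E] [BorelSpace E] {q : ℝ}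
    (hq : 0 < q) {S : Set E}
    (H : ∀ ε : ℝ≥0∞, ε ≠ 0 → ∃ O, IsOpen O ∧ S ⊆ O ∧ ∀ ν : Measure E, ν Oᶜ = 0 → ν univ ≤ 1 →
      HasBallGrowth ν q (3 ^ Module.finrank ℝ E) → ν univ ≤ ε) :
    μH[q] S = 0 := by
  rcases lt_or_ge (Module.finrank ℝ E : ℝ) q with hqE | hqE
  · simp [Real.hausdorffMeasure_of_finrank_lt hqE]
  set φ := (stdOrthonormalBasis ℝ E).repr.toIsometryEquiv
  rw [← φ.hausdorffMeasure_image, ← inter_univ (φ '' S), ← iUnion_dyadicCube 0, inter_iUnion,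
    measure_iUnion_null_iff]
  refine fun z => hausdorffMeasure_inter_dyadicCube_eq_zero hq hqE z fun ε hε => ?_
  obtain ⟨O, hO, hSO, hν⟩ := H ε hε
  refine ⟨φ '' O, φ.toHomeomorph.isOpen_image.2 hO, image_mono hSO, fun ν hF => ?_⟩
  have hgrowth : HasBallGrowth ν q (3 ^ Module.finrank ℝ E * 1) :=
    hasBallGrowth_of_forall_dyadicCube_le fun j w =>
      (hF.measure_dyadicCube_le j j.zero_le w).trans_eq (one_mul _).symm
  have hmap : ∀ s, (ν.map φ.symm) s = ν (φ '' s) := fun s => by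
    rw [← φ.preimage_symm]
    exact φ.symm.toHomeomorph.measurableEmbedding.map_apply ν s
  rw [← image_univ_of_surjective φ.surjective, ← hmap]
  refine hν _ ?_ ?_ ?_
  · rw [hmap, image_compl_eq φ.bijective]
    exact hF.measure_compl
  · rw [hmap, image_univ_of_surjective φ.surjective, ← dyadicWeight_zero q]
    exact hF.measure_univ_le
  · rw [← mul_one (3 ^ _)]
    exact hgrowth.map_isometryEquiv φ.symm

end FrostmanCriterion

/-! ### Riesz potentials -/

section RieszPotential

lemma tsum_indicator_closedBall_eq_top {X : Type*} [PseudoMetricSpace X] {t : ℝ} (ht : 0 ≤ t)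
    {x y : X} (h : dist x y = 0) :
    ∑' j : ℕ, (closedBall x ((2 : ℝ)⁻¹ ^ j)).indicator
      (fun _ => dyadicWeight (-t) (j + 1)) y = ∞ := by
  rw [← top_le_iff, ← ENNReal.tsum_const_eq_top_of_ne_zero (α := ℕ) (c := 1) one_ne_zero]
  refine ENNReal.tsum_le_tsum fun j => ?_
  rw [indicator_of_mem (by rw [mem_closedBall, dist_comm, h]; positivity)]
  exact (ENNReal.one_rpow _).symm.trans_le
    (ENNReal.rpow_le_rpow one_le_two (by rw [mul_neg, neg_neg]; positivity))

lemma exists_mem_closedBall_edist_rpow_neg_le {X : Type*} [PseudoMetricSpace X] {t : ℝ}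
    (ht : 0 ≤ t) {x y : X} (h0 : 0 < dist x y) (h1 : dist x y ≤ 1) :
    ∃ j : ℕ, y ∈ closedBall x ((2 : ℝ)⁻¹ ^ j) ∧ edist x y ^ (-t) ≤ dyadicWeight (-t) (j + 1) := by
  obtain ⟨j, hlt, hle⟩ := exists_nat_pow_near_of_lt_one h0 h1 (y := (2 : ℝ)⁻¹) (by norm_num)
    (by norm_num)
  refine ⟨j, by rwa [mem_closedBall, dist_comm], ?_⟩
  rw [dyadicWeight_eq_rpow, ENNReal.rpow_neg, ENNReal.rpow_neg]
  gcongr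
  rw [edist_dist]
  refine Eq.trans_le ?_ (ENNReal.ofReal_le_ofReal hlt.le)
  rw [ENNReal.ofReal_pow (by norm_num), ENNReal.ofReal_inv_of_pos (by norm_num),
    ENNReal.ofReal_ofNat]

lemma edist_rpow_neg_le_tsum {X : Type*} [PseudoMetricSpace X] {t : ℝ} (ht : 0 ≤ t) (x y : X) :
    edist x y ^ (-t) ≤
      1 + ∑' j : ℕ, (closedBall x ((2 : ℝ)⁻¹ ^ j)).indicator
        (fun _ => dyadicWeight (-t) (j + 1)) y := by
  rcases le_or_gt 1 (edist x y) with h | h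
  · refine le_add_right ?_
    rw [ENNReal.rpow_neg, ENNReal.inv_le_one]
    exact ENNReal.one_rpow t ▸ ENNReal.rpow_le_rpow h ht
  refine le_add_left ?_
  rcases (dist_nonneg (x := x) (y := y)).eq_or_lt' with h0 | h0
  · rw [tsum_indicator_closedBall_eq_top ht h0]
    exact le_top
  · have h1 : dist x y ≤ 1 := by
      rw [edist_dist, ← ENNReal.ofReal_one, ENNReal.ofReal_lt_ofReal_iff one_pos] at h
      exact h.le
    obtain ⟨j, hj, hle⟩ := exists_mem_closedBall_edist_rpow_neg_le ht h0 h1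
    refine le_trans ?_ (ENNReal.le_tsum j)
    rwa [indicator_of_mem hj]

lemma HasBallGrowth.lintegral_edist_rpow_neg_le {X : Type*} [PseudoMetricSpace X]
    [MeasurableSpace X] [OpensMeasurableSpace X] {ν : Measure X} {t q : ℝ} {C : ℝ≥0∞}
    (hν : HasBallGrowth ν q C) (ht : 0 ≤ t) (x : X) :
    ∫⁻ y, edist x y ^ (-t) ∂ν ≤
      ν univ + dyadicWeight (-t) 1 * C * ∑' j, dyadicWeight (q - t) j := by
  refine (lintegral_mono fun y => edist_rpow_neg_le_tsum ht x y).trans ?_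
  rw [lintegral_add_left measurable_const, lintegral_one, lintegral_tsum
    fun j => (measurable_const.indicator measurableSet_closedBall).aemeasurable,
    ← ENNReal.tsum_mul_left]
  gcongr with j
  rw [lintegral_indicator_const measurableSet_closedBall, dyadicWeight_add]
  calc _ ≤ dyadicWeight (-t) j * dyadicWeight (-t) 1 * (C * dyadicWeight q j) := by
        gcongr; exact hν x j
    _ = dyadicWeight (-t) 1 * C * (dyadicWeight q j * dyadicWeight (-t) j) := by ring
    _ = _ := by rw [dyadicWeight_mul, ← sub_eq_add_neg]

/-- The Riesz energy of order `t` of the measure `μ`. -/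
noncomputable def rieszEnergy {X : Type*} [EDist X] [MeasurableSpace X] (t : ℝ) (μ : Measure X) :
    ℝ≥0∞ :=
  ∫⁻ q, edist q.1 q.2 ^ (-t) ∂(μ.prod μ)

variable {X : Type*} [PseudoMetricSpace X] [SecondCountableTopology X] [MeasurableSpace X]
  [OpensMeasurableSpace X] {μ : Measure X} {t q : ℝ} {C : ℝ≥0∞}

lemma HasBallGrowth.rieszEnergy_le [SFinite μ] (hμ : HasBallGrowth μ q C) (ht : 0 ≤ t) :
    rieszEnergy t μ ≤
      (μ univ + dyadicWeight (-t) 1 * C * ∑' j, dyadicWeight (q - t) j) * μ univ := by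
  rw [rieszEnergy, lintegral_prod _ (by fun_prop), ← lintegral_const]
  exact lintegral_mono fun x => hμ.lintegral_edist_rpow_neg_le ht x

lemma HasBallGrowth.rieszEnergy_ne_top [IsFiniteMeasure μ] (hμ : HasBallGrowth μ q C)
    (hC : C ≠ ∞) (ht : 0 ≤ t) (htq : t < q) : rieszEnergy t μ ≠ ∞ := by
  have hsum := tsum_dyadicWeight_ne_top (sub_pos.2 htq)
  have hweight := dyadicWeight_ne_top (-t) 1
  exact ne_top_of_le_ne_top (by finiteness) (hμ.rieszEnergy_le ht)

end RieszPotential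

/-! ### Slabs around hyperplanes -/

section Slab

open ProbabilityTheory Filter

/-- The normalized indicator function of the interval `[-δ, δ]`. -/
noncomputable def slabKernel (δ t : ℝ) : ℝ≥0∞ :=
  (closedBall (0 : ℝ) δ).indicator (fun _ => (ENNReal.ofReal (2 * δ))⁻¹) t

/-- The correlation of two normalized indicator functions of intervals. -/
noncomputable def slabPair (δ δ' t : ℝ) : ℝ≥0∞ := ∫⁻ u, slabKernel δ u * slabKernel δ' (u + t)

@[fun_prop]
lemma measurable_slabKernel (δ : ℝ) : Measurable (slabKernel δ) :=
  measurable_const.indicator measurableSet_closedBall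

lemma lintegral_slabKernel {δ : ℝ} (hδ : 0 < δ) : ∫⁻ t, slabKernel δ t = 1 := by
  simp only [slabKernel]
  rw [lintegral_indicator_const measurableSet_closedBall, Real.volume_closedBall,
    ENNReal.inv_mul_cancel (ENNReal.ofReal_pos.2 (by positivity)).ne' ENNReal.ofReal_ne_top]

lemma slabKernel_eq_zero {δ t : ℝ} (h : δ < |t|) : slabKernel δ t = 0 :=
  indicator_of_notMem (by simpa using h) _

@[fun_prop]
lemma measurable_slabPair (δ δ' : ℝ) : Measurable (slabPair δ δ') := by
  unfold slabPair
  exact Measurable.lintegral_prod_right'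
    (f := fun p : ℝ × ℝ => slabKernel δ p.2 * slabKernel δ' (p.2 + p.1)) (by fun_prop)

lemma lintegral_slabPair {δ δ' : ℝ} (hδ : 0 < δ) (hδ' : 0 < δ') :
    ∫⁻ t, slabPair δ δ' t = 1 := by
  unfold slabPair
  rw [lintegral_lintegral_swap (by fun_prop)]
  have hinner : ∀ u, ∫⁻ t, slabKernel δ u * slabKernel δ' (u + t) = slabKernel δ u := fun u => by
    rw [lintegral_const_mul _ (by fun_prop), lintegral_add_left_eq_self (slabKernel δ') u,
      lintegral_slabKernel hδ', mul_one]
  simp only [hinner, lintegral_slabKernel hδ]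

lemma slabPair_eq_zero {δ δ' t : ℝ} (h : δ + δ' < |t|) : slabPair δ δ' t = 0 := by
  unfold slabPair
  rw [lintegral_eq_zero_iff (by fun_prop)]
  refine Eventually.of_forall fun u => ?_
  simp only [Pi.zero_apply, mul_eq_zero]
  by_contra! hc
  have h1 : |u| ≤ δ := not_lt.1 fun h' => hc.1 (slabKernel_eq_zero h')
  have h2 : |u + t| ≤ δ' := not_lt.1 fun h' => hc.2 (slabKernel_eq_zero h')
  have htri := abs_sub (u + t) u
  rw [add_sub_cancel_left] at htri
  linarith

lemma lintegral_slabKernel_mul_slabKernel (δ δ' a b : ℝ) :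
    ∫⁻ u, slabKernel δ (u - a) * slabKernel δ' (u - b) = slabPair δ δ' (a - b) := by
  rw [slabPair, ← lintegral_sub_right_eq_self
    (fun u => slabKernel δ u * slabKernel δ' (u + (a - b))) a]
  refine lintegral_congr fun u => ?_
  congr 2; ring

/-- The density at the origin of the standard Gaussian distribution on the line. -/
noncomputable def gaussianPeak : ℝ≥0∞ := ENNReal.ofReal (√(2 * Real.pi))⁻¹

lemma gaussianPeak_ne_top : gaussianPeak ≠ ∞ := ENNReal.ofReal_ne_top

lemma gaussianPDF_le_of_abs_le (v : NNReal) {t u : ℝ} (h : |t| ≤ |u|) :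
    gaussianPDF 0 v u ≤ gaussianPDF 0 v t := by
  have hsq := sq_le_sq.2 h
  rw [gaussianPDF, gaussianPDF, gaussianPDFReal, gaussianPDFReal, sub_zero, sub_zero]
  gcongr

lemma gaussianPDF_zero_eq_gaussianPeak_mul {E : Type*} [NormedAddCommGroup E] {z : E}
    (hz : z ≠ 0) : gaussianPDF 0 (‖z‖₊ ^ 2) 0 = gaussianPeak * ‖z‖ₑ⁻¹ := by
  have hz' : 0 < ‖z‖ := norm_pos_iff.2 hz
  rw [gaussianPDF, gaussianPDFReal, gaussianPeak, ← ofReal_norm, ← ENNReal.ofReal_inv_of_pos hz',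
    ← ENNReal.ofReal_mul (by positivity), ← mul_inv, NNReal.coe_pow, coe_nnnorm,
    Real.sqrt_mul (by positivity), Real.sqrt_sq hz'.le]
  simp

lemma measurable_gaussianPDF_nnnorm_sq {E : Type*} [NormedAddCommGroup E] [MeasurableSpace E]
    [OpensMeasurableSpace E] (t : ℝ) : Measurable fun z : E => gaussianPDF 0 (‖z‖₊ ^ 2) t := by
  unfold gaussianPDF gaussianPDFReal
  fun_prop

variable {E : Type*} [NormedAddCommGroup E] [InnerProductSpace ℝ E] [FiniteDimensional ℝ E]
  [MeasurableSpace E] [BorelSpace E]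

lemma map_inner_stdGaussian (z : E) :
    (stdGaussian E).map (fun e => ⟪z, e⟫) = gaussianReal 0 (‖z‖₊ ^ 2) := by
  have hmap := IsGaussian.map_eq_gaussianReal (μ := stdGaussian E) (innerSL ℝ z)
  rw [integral_strongDual_stdGaussian, variance_dual_stdGaussian, innerSL_apply_norm,
    Real.toNNReal_pow (norm_nonneg z), norm_toNNReal] at hmap
  exact hmap

variable (E) in
/-- The measure on pairs `(e, u)`, thought of as the hyperplanes `⟪y, e⟫ = u`, under which `e` is a
standard Gaussian vector. The normal vector `e` is not normalized: this makes the set of directions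
a product space with rotation invariant measure, and only null sets of directions matter. -/
noncomputable abbrev hyperplaneMeasure : Measure (E × ℝ) := (stdGaussian E).prod volume

/-- The mean of `slabPair` at `⟪z, e⟫` over Gaussian directions `e`. -/
noncomputable def gaussianSlabPair (δ δ' : ℝ) (z : E) : ℝ≥0∞ :=
  ∫⁻ e, slabPair δ δ' ⟪z, e⟫ ∂(stdGaussian E)

lemma gaussianSlabPair_eq (δ δ' : ℝ) {z : E} (hz : z ≠ 0) :
    gaussianSlabPair δ δ' z = ∫⁻ t, slabPair δ δ' t * gaussianPDF 0 (‖z‖₊ ^ 2) t := by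
  rw [gaussianSlabPair, ← lintegral_map (μ := stdGaussian E) (f := slabPair δ δ')
    (g := fun e => ⟪z, e⟫) (by fun_prop) (by fun_prop), map_inner_stdGaussian,
    gaussianReal_of_var_ne_zero _ (by simpa using hz),
    lintegral_withDensity_eq_lintegral_mul _ (by fun_prop) (by fun_prop)]
  simp only [Pi.mul_apply, mul_comm]

lemma gaussianSlabPair_le {δ δ' : ℝ} (hδ : 0 < δ) (hδ' : 0 < δ') (z : E) :
    gaussianSlabPair δ δ' z ≤ gaussianPeak * ‖z‖ₑ⁻¹ := by
  rcases eq_or_ne z 0 with rfl | hz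
  · have hpeak : gaussianPeak ≠ 0 := by simp [gaussianPeak, Real.pi_pos]
    simp [ENNReal.mul_top hpeak]
  rw [gaussianSlabPair_eq δ δ' hz]
  calc _ ≤ ∫⁻ t, slabPair δ δ' t * (gaussianPeak * ‖z‖ₑ⁻¹) := by
        gcongr with t
        rw [← gaussianPDF_zero_eq_gaussianPeak_mul hz]
        exact gaussianPDF_le_of_abs_le _ (by simp)
    _ = _ := by rw [lintegral_mul_const _ (by fun_prop), lintegral_slabPair hδ hδ', one_mul]

lemma le_gaussianSlabPair {δ δ' η : ℝ} (hδ : 0 < δ) (hδ' : 0 < δ') (h : δ + δ' ≤ η) {z : E}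
    (hz : z ≠ 0) : gaussianPDF 0 (‖z‖₊ ^ 2) η ≤ gaussianSlabPair δ δ' z := by
  rw [gaussianSlabPair_eq δ δ' hz]
  calc _ = ∫⁻ t, slabPair δ δ' t * gaussianPDF 0 (‖z‖₊ ^ 2) η := by
        rw [lintegral_mul_const _ (by fun_prop), lintegral_slabPair hδ hδ', one_mul]
    _ ≤ _ := by
        refine lintegral_mono fun t => ?_
        rcases le_or_gt |t| (δ + δ') with ht | ht
        · dsimp only
          gcongr
          exact gaussianPDF_le_of_abs_le _ ((ht.trans h).trans (le_abs_self η))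
        · simp [slabPair_eq_zero ht]

/-- The density at `p = (e, u)` of the part of `μ` in a slab of width `2 * δ` around the
hyperplane `⟪y, e⟫ = u`. -/
noncomputable def slabDensity (μ : Measure E) (δ : ℝ) (p : E × ℝ) : ℝ≥0∞ :=
  ∫⁻ y, slabKernel δ (p.2 - ⟪y, p.1⟫) ∂μ

@[fun_prop]
lemma measurable_slabDensity (μ : Measure E) [SFinite μ] (δ : ℝ) :
    Measurable (slabDensity μ δ) := by
  unfold slabDensity
  exact Measurable.lintegral_prod_right'
    (f := fun q : (E × ℝ) × E => slabKernel δ (q.1.2 - ⟪q.2, q.1.1⟫)) (by fun_prop)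

lemma lintegral_slabKernel_mul_weight (μ : Measure E) [SFinite μ] (δ δ' : ℝ) {w : E × E → ℝ≥0∞}
    (hw : Measurable w) :
    ∫⁻ p, ∫⁻ q, slabKernel δ (p.2 - ⟪q.1, p.1⟫) * slabKernel δ' (p.2 - ⟪q.2, p.1⟫) * w q
        ∂(μ.prod μ) ∂hyperplaneMeasure E =
      ∫⁻ q, w q * gaussianSlabPair δ δ' (q.1 - q.2) ∂(μ.prod μ) := by
  rw [lintegral_lintegral_swap (by fun_prop)]
  refine lintegral_congr fun q => ?_
  rw [lintegral_mul_const _ (by fun_prop), mul_comm, lintegral_prod _ (by fun_prop),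
    gaussianSlabPair]
  congr 1
  refine lintegral_congr fun e => ?_
  dsimp only
  rw [lintegral_slabKernel_mul_slabKernel, inner_sub_left]

lemma lintegral_slabDensity_mul (μ : Measure E) [SFinite μ] (δ δ' : ℝ) :
    ∫⁻ p, slabDensity μ δ p * slabDensity μ δ' p ∂hyperplaneMeasure E =
      ∫⁻ q, gaussianSlabPair δ δ' (q.1 - q.2) ∂(μ.prod μ) := by
  have hone := lintegral_slabKernel_mul_weight μ δ δ' (w := fun _ => 1) measurable_const
  simp only [mul_one, one_mul] at hone
  rw [← hone]
  refine lintegral_congr fun p => ?_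
  rw [slabDensity, slabDensity, ← lintegral_prod_mul (by fun_prop) (by fun_prop)]

lemma lintegral_slabDensity_mul_self_le (μ : Measure E) [SFinite μ] {δ δ' : ℝ} (hδ : 0 < δ)
    (hδ' : 0 < δ') :
    ∫⁻ p, slabDensity μ δ p * slabDensity μ δ' p ∂hyperplaneMeasure E ≤
      gaussianPeak * rieszEnergy 1 μ := by
  rw [lintegral_slabDensity_mul, rieszEnergy, ← lintegral_const_mul _ (by fun_prop)]
  refine lintegral_mono fun q => (gaussianSlabPair_le hδ hδ' _).trans_eq ?_
  rw [edist_eq_enorm_sub, ENNReal.rpow_neg_one]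

lemma le_liminf_lintegral_slabKernel {f : ℝ → ℝ≥0∞} (hf : LowerSemicontinuous f) (u : ℝ)
    {δ : ℕ → ℝ} (hδ : ∀ k, 0 < δ k) (hlim : Tendsto δ atTop (nhds 0)) :
    f u ≤ liminf (fun k => ∫⁻ v, slabKernel (δ k) (v - u) * f v) atTop := by
  refine le_of_forall_lt fun a ha => ?_
  obtain ⟨b, hab, hb⟩ := exists_between ha
  refine hab.trans_le (le_liminf_of_le (by isBoundedDefault) ?_)
  obtain ⟨r, hr, hball⟩ := Metric.eventually_nhds_iff.1 (hf u b hb)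
  filter_upwards [hlim.eventually (gt_mem_nhds hr)] with k hk
  calc b = ∫⁻ v, slabKernel (δ k) (v - u) * b := by
        rw [lintegral_mul_const _ (by fun_prop), lintegral_sub_right_eq_self (slabKernel (δ k)) u,
          lintegral_slabKernel (hδ k), one_mul]
    _ ≤ _ := by
        refine lintegral_mono fun v => ?_
        rcases le_or_gt |v - u| (δ k) with hv | hv
        · dsimp only
          gcongr
          exact (hball (hv.trans_lt hk)).le
        · simp [slabKernel_eq_zero hv]

/-- The dual Radon transform of a function `g` of hyperplanes: the mean of `g` over the hyperplanes
through `x`. -/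
noncomputable def dualRadon (g : E × ℝ → ℝ≥0∞) (x : E) : ℝ≥0∞ :=
  ∫⁻ e, g (e, ⟪x, e⟫) ∂(stdGaussian E)

lemma lintegral_slabKernel_mul_eq (ν : Measure E) [SFinite ν] {g : E × ℝ → ℝ≥0∞}
    (hg : Measurable g) (δ : ℝ) :
    ∫⁻ a, ∫⁻ v, slabKernel δ (v - ⟪a.1, a.2⟫) * g (a.2, v) ∂volume
        ∂(ν.prod (stdGaussian E)) =
      ∫⁻ p, g p * slabDensity ν δ p ∂hyperplaneMeasure E := by
  rw [lintegral_prod _ (Measurable.aemeasurable (Measurable.lintegral_prod_right'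
    (f := fun b : (E × E) × ℝ => slabKernel δ (b.2 - ⟪b.1.1, b.1.2⟫) * g (b.1.2, b.2))
    (by fun_prop)))]
  have hjoin : ∀ x : E, ∫⁻ e, ∫⁻ v, slabKernel δ (v - ⟪x, e⟫) * g (e, v) ∂volume ∂(stdGaussian E) =
      ∫⁻ p, slabKernel δ (p.2 - ⟪x, p.1⟫) * g p ∂hyperplaneMeasure E := fun x =>
    (lintegral_prod (fun p : E × ℝ => slabKernel δ (p.2 - ⟪x, p.1⟫) * g p) (by fun_prop)).symm
  simp only [hjoin]
  rw [lintegral_lintegral_swap (by fun_prop)]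
  refine lintegral_congr fun p => ?_
  rw [lintegral_mul_const _ (by fun_prop), mul_comm, slabDensity]

lemma lintegral_mul_slabDensity_le (ν : Measure E) [SFinite ν] {g : E × ℝ → ℝ≥0∞}
    (hg : Measurable g) {δ : ℝ} (hδ : 0 < δ) :
    ∫⁻ p, g p * slabDensity ν δ p ∂hyperplaneMeasure E ≤
      (∫⁻ p, g p ^ (2 : ℝ) ∂hyperplaneMeasure E) ^ (1 / 2 : ℝ) *
        (gaussianPeak * rieszEnergy 1 ν) ^ (1 / 2 : ℝ) := by
  refine (ENNReal.lintegral_mul_le_Lp_mul_Lq _ Real.HolderConjugate.two_two hg.aemeasurable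
    (by fun_prop)).trans ?_
  gcongr
  simp only [ENNReal.rpow_two, sq]
  exact lintegral_slabDensity_mul_self_le ν hδ hδ

lemma lintegral_dualRadon_le (ν : Measure E) [SFinite ν] {g : E × ℝ → ℝ≥0∞}
    (hg : LowerSemicontinuous g) :
    ∫⁻ x, dualRadon g x ∂ν ≤ (∫⁻ p, g p ^ (2 : ℝ) ∂hyperplaneMeasure E) ^ (1 / 2 : ℝ) *
      (gaussianPeak * rieszEnergy 1 ν) ^ (1 / 2 : ℝ) := by
  have hgm : Measurable g := hg.measurable
  set δ : ℕ → ℝ := fun k => 1 / ((k : ℝ) + 1)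
  have hδ : ∀ k, 0 < δ k := fun k => by positivity
  have hlim : Tendsto δ atTop (nhds 0) := tendsto_one_div_add_atTop_nhds_zero_nat
  calc ∫⁻ x, dualRadon g x ∂ν = ∫⁻ a, g (a.2, ⟪a.1, a.2⟫) ∂(ν.prod (stdGaussian E)) :=
        (lintegral_prod (fun a : E × E => g (a.2, ⟪a.1, a.2⟫)) (by fun_prop)).symm
    _ ≤ ∫⁻ a, liminf (fun k => ∫⁻ v, slabKernel (δ k) (v - ⟪a.1, a.2⟫) * g (a.2, v)) atTop
          ∂(ν.prod (stdGaussian E)) :=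
        lintegral_mono fun a => le_liminf_lintegral_slabKernel
          (f := fun v => g (a.2, v)) (hg.comp (by fun_prop)) _ hδ hlim
    _ ≤ liminf (fun k => ∫⁻ a, ∫⁻ v, slabKernel (δ k) (v - ⟪a.1, a.2⟫) * g (a.2, v) ∂volume
          ∂(ν.prod (stdGaussian E))) atTop :=
        lintegral_liminf_le fun k => Measurable.lintegral_prod_right'
          (f := fun b : (E × E) × ℝ => slabKernel (δ k) (b.2 - ⟪b.1.1, b.1.2⟫) * g (b.1.2, b.2))
          (by fun_prop)
    _ ≤ _ := liminf_le_of_le (by isBoundedDefault) fun b hb => by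
        obtain ⟨k, hk⟩ := hb.exists
        exact hk.trans ((lintegral_slabKernel_mul_eq ν hgm (δ k)).trans_le
          (lintegral_mul_slabDensity_le ν hgm (hδ k)))

end Slab

/-! ### Exceptional sets for integrals over hyperplanes -/

section Exceptional

open ProbabilityTheory Filter

lemma lowerSemicontinuous_lintegral {X Y : Type*} [TopologicalSpace X] [FirstCountableTopology X]
    [MeasurableSpace Y] {μ : Measure Y} {f : X → Y → ℝ≥0∞} (hf : ∀ x, Measurable (f x))
    (hl : ∀ y, LowerSemicontinuous fun x => f x y) :
    LowerSemicontinuous fun x => ∫⁻ y, f x y ∂μ := by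
  rw [lowerSemicontinuous_iff_isClosed_preimage]
  refine fun c => IsSeqClosed.isClosed fun u x hu hx => ?_
  calc ∫⁻ y, f x y ∂μ ≤ ∫⁻ y, liminf (fun k => f (u k) y) atTop ∂μ :=
        lintegral_mono fun y => ((hl y).le_liminf x).trans (liminf_le_liminf_of_le hx)
    _ ≤ liminf (fun k => ∫⁻ y, f (u k) y ∂μ) atTop := lintegral_liminf_le fun k => hf _
    _ ≤ c := liminf_le_of_le (by isBoundedDefault) fun b hb => by
        obtain ⟨k, hk⟩ := hb.exists
        exact hk.trans (hu k)

lemma dimH_le_one_of_hausdorffMeasure_eq_zero {X : Type*} [EMetricSpace X] [MeasurableSpace X]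
    [BorelSpace X] {S : Set X} (h : ∀ q : ℝ, 1 < q → μH[q] S = 0) : dimH S ≤ 1 := by
  by_contra! hc
  obtain ⟨q, h1q, hqS⟩ := ENNReal.lt_iff_exists_nnreal_btwn.1 hc
  refine ENNReal.top_ne_zero ((hausdorffMeasure_of_lt_dimH hqS).symm.trans (h q ?_))
  exact_mod_cast h1q

lemma le_of_mul_le_sqrt_mul_sqrt {M C m ε : ℝ≥0∞} (hm : m ≠ ∞) (hε : ε ≠ 0) {l : ℕ}
    (hl : M * C / ε < l)
    (h : l * m ≤ M ^ (1 / 2 : ℝ) * (C * m) ^ (1 / 2 : ℝ)) : m ≤ ε := by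
  rcases eq_or_ne m 0 with rfl | hm0
  · exact zero_le
  have hl0 : l ≠ 0 := by
    rintro rfl
    simp at hl
  have hsq : (l * m) ^ 2 ≤ M * C * m := by
    calc (l * m) ^ 2 ≤ (M ^ (1 / 2 : ℝ) * (C * m) ^ (1 / 2 : ℝ)) ^ 2 := by gcongr
      _ = M * C * m := by
        rw [mul_pow, ← ENNReal.rpow_mul_natCast, ← ENNReal.rpow_mul_natCast, mul_assoc]
        norm_num
  have hlm : l * m ≤ M * C := by
    refine (ENNReal.mul_le_mul_iff_left hm0 hm).1 (le_trans ?_ hsq)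
    rw [sq]
    gcongr
    exact le_mul_of_one_le_left' (by exact_mod_cast Nat.one_le_iff_ne_zero.2 hl0)
  have hlε : M * C ≤ l * ε :=
    (ENNReal.div_le_iff_le_mul (Or.inl hε) (Or.inr (by exact_mod_cast hl0))).1 hl.le
  exact (ENNReal.mul_le_mul_iff_right (by exact_mod_cast hl0) (ENNReal.natCast_ne_top l)).1
    (hlm.trans hlε)

variable {E : Type*} [NormedAddCommGroup E] [InnerProductSpace ℝ E] [FiniteDimensional ℝ E]
  [MeasurableSpace E] [BorelSpace E]

lemma lowerSemicontinuous_dualRadon {g : E × ℝ → ℝ≥0∞} (hg : LowerSemicontinuous g) :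
    LowerSemicontinuous (dualRadon g) :=
  lowerSemicontinuous_lintegral (fun _ => hg.measurable.comp (by fun_prop))
    fun e => hg.comp (g := fun x => (e, ⟪x, e⟫)) (by fun_prop)

lemma dimH_setOf_dualRadon_eq_top_le {g : E × ℝ → ℝ≥0∞} (hg : LowerSemicontinuous g)
    (hint : ∫⁻ p, g p ^ (2 : ℝ) ∂hyperplaneMeasure E ≠ ∞) :
    dimH {x | dualRadon g x = ∞} ≤ 1 := by
  set M := ∫⁻ p, g p ^ (2 : ℝ) ∂hyperplaneMeasure E
  refine dimH_le_one_of_hausdorffMeasure_eq_zero fun q hq =>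
    hausdorffMeasure_eq_zero_of_forall_hasBallGrowth (zero_lt_one.trans hq) fun ε hε => ?_
  set d := Module.finrank ℝ E
  set C := gaussianPeak * (1 + dyadicWeight (-1) 1 * 3 ^ d * ∑' j, dyadicWeight (q - 1) j)
  have hC : C ≠ ∞ := by
    have hsum := tsum_dyadicWeight_ne_top (sub_pos.2 hq)
    have hweight := dyadicWeight_ne_top (-1) 1
    have hpeak := gaussianPeak_ne_top
    finiteness
  obtain ⟨l, hl⟩ := ENNReal.exists_nat_gt (ENNReal.div_ne_top (ENNReal.mul_ne_top hint hC) hε)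
  refine ⟨dualRadon g ⁻¹' Ioi l, (lowerSemicontinuous_dualRadon hg).isOpen_preimage _,
    fun x hx => (ENNReal.natCast_lt_top l).trans_eq (Eq.symm hx), fun ν hO h1 hν => ?_⟩
  have : IsFiniteMeasure ν := ⟨h1.trans_lt ENNReal.one_lt_top⟩
  refine le_of_mul_le_sqrt_mul_sqrt (measure_ne_top ν _) hε hl ?_
  calc l * ν univ = ∫⁻ _, l ∂ν := by rw [lintegral_const]
    _ ≤ ∫⁻ x, dualRadon g x ∂ν := by
      refine lintegral_mono_ae ?_
      filter_upwards [measure_eq_zero_iff_ae_notMem.1 hO] with x hx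
      exact (notMem_compl_iff.1 hx).le
    _ ≤ M ^ (1 / 2 : ℝ) * (gaussianPeak * rieszEnergy 1 ν) ^ (1 / 2 : ℝ) :=
      lintegral_dualRadon_le ν hg
    _ ≤ M ^ (1 / 2 : ℝ) * (C * ν univ) ^ (1 / 2 : ℝ) := by
      rw [mul_assoc gaussianPeak]
      gcongr
      refine (hν.rieszEnergy_le zero_le_one).trans ?_
      gcongr

lemma dimH_setOf_dualRadon_sqrt_eq_top_le {F : E × ℝ → ℝ≥0∞} (hF : Measurable F)
    (hint : ∫⁻ p, F p ∂hyperplaneMeasure E ≠ ∞) :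
    dimH {x | dualRadon (fun p => F p ^ (1 / 2 : ℝ)) x = ∞} ≤ 1 := by
  obtain ⟨G, hFG, hG, hGint⟩ :=
    exists_le_lowerSemicontinuous_lintegral_ge (hyperplaneMeasure E) F hF one_ne_zero
  have hg : LowerSemicontinuous fun p => G p ^ (1 / 2 : ℝ) :=
    ENNReal.continuous_rpow_const.comp_lowerSemicontinuous hG
      (ENNReal.monotone_rpow_of_nonneg (by norm_num))
  refine (dimH_mono fun x hx => top_unique ?_).trans (dimH_setOf_dualRadon_eq_top_le hg ?_)
  · refine hx.symm.trans_le (lintegral_mono fun e => ?_)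
    dsimp only
    gcongr
    exact hFG _
  · simp only [← ENNReal.rpow_mul]
    norm_num only [ENNReal.rpow_one]
    exact ne_top_of_le_ne_top (by simpa using hint) hGint

lemma dimH_setOf_not_ae_le {P : E × ℝ → Prop} (hP : ∀ᵐ p ∂hyperplaneMeasure E, P p) :
    dimH {x | ¬ ∀ᵐ e ∂stdGaussian E, P (e, ⟪x, e⟫)} ≤ 1 := by
  set N := toMeasurable (hyperplaneMeasure E) {p | ¬ P p}
  have hN : MeasurableSet N := measurableSet_toMeasurable _ _
  have hN0 : hyperplaneMeasure E N = 0 := (measure_toMeasurable _).trans (ae_iff.1 hP)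
  refine (dimH_mono fun x hx => ?_).trans (dimH_setOf_dualRadon_sqrt_eq_top_le
    (F := N.indicator fun _ => ∞) (measurable_const.indicator hN)
    (by rw [lintegral_indicator_const hN, hN0]; simp))
  have hroot : ∀ e, N.indicator (fun _ => ∞) (e, ⟪x, e⟫) ^ (1 / 2 : ℝ) =
      ((fun e => (e, ⟪x, e⟫)) ⁻¹' N).indicator (fun _ => (∞ : ℝ≥0∞)) e := fun e => by
    by_cases h : (e, ⟪x, e⟫) ∈ N <;> simp [indicator, h]
  simp only [mem_ofPred_eq, dualRadon, hroot]
  rw [lintegral_indicator_const (hN.preimage (by fun_prop)), ENNReal.top_mul]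
  exact fun h => hx (measure_mono_null (t := (fun e => (e, ⟪x, e⟫)) ⁻¹' N)
    (fun e he => subset_toMeasurable _ {p | ¬ P p} he) h)

end Exceptional

/-! ### Compact subsets with bounded density -/

section Density

variable {n : ℕ}

/-- The dyadic cubes of generation at least `k₀` on which the `s`-dimensional density of `μ`
exceeds `M`. -/
def denseCubes (μ : Measure (EuclideanSpace ℝ (Fin n))) (s : ℝ) (M : ℝ≥0∞) (k₀ : ℕ) :
    Set (ℕ × (Fin n → ℤ)) :=
  {p | k₀ ≤ p.1 ∧ M * dyadicWeight s p.1 < μ (dyadicCube p.1 p.2)}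

/-- The cubes of `denseCubes` that are contained in no larger one. -/
def maximalDenseCubes (μ : Measure (EuclideanSpace ℝ (Fin n))) (s : ℝ) (M : ℝ≥0∞) (k₀ : ℕ) :
    Set (ℕ × (Fin n → ℤ)) :=
  {p ∈ denseCubes μ s M k₀ | ∀ p' ∈ denseCubes μ s M k₀, p'.1 < p.1 →
    ¬ dyadicCube p.1 p.2 ⊆ dyadicCube p'.1 p'.2}

lemma pairwise_disjoint_maximalDenseCubes (μ : Measure (EuclideanSpace ℝ (Fin n))) (s : ℝ)
    (M : ℝ≥0∞) (k₀ : ℕ) :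
    (maximalDenseCubes μ s M k₀).PairwiseDisjoint fun p => dyadicCube p.1 p.2 := by
  rintro ⟨k, w⟩ hp ⟨k', w'⟩ hp' hne
  refine Set.disjoint_left.2 fun x hx hx' => hne ?_
  rcases lt_trichotomy k k' with h | rfl | h
  · exact absurd (dyadicCube_subset_of_mem h.le hx hx') (hp'.2 _ hp.1 h)
  · exact congrArg _ (dyadicCube_index_unique hx hx')
  · exact absurd (dyadicCube_subset_of_mem h.le hx' hx) (hp.2 _ hp'.1 h)

lemma exists_mem_maximalDenseCubes {μ : Measure (EuclideanSpace ℝ (Fin n))} {s : ℝ}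
    {M : ℝ≥0∞} {k₀ : ℕ} {x : EuclideanSpace ℝ (Fin n)}
    (hx : ∃ p ∈ denseCubes μ s M k₀, x ∈ dyadicCube p.1 p.2) :
    ∃ p ∈ maximalDenseCubes μ s M k₀, x ∈ dyadicCube p.1 p.2 := by
  obtain ⟨p, ⟨hp, hxp⟩, hmin⟩ := WellFounded.has_min (measure (Prod.fst (β := Fin n → ℤ))).wf
    {p | p ∈ denseCubes μ s M k₀ ∧ x ∈ dyadicCube p.1 p.2} hx
  exact ⟨p, ⟨hp, fun p' hp' hlt hsub => hmin p' ⟨hp', hsub hxp⟩ hlt⟩, hxp⟩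

lemma tsum_ediam_maximalDenseCubes_le (μ : Measure (EuclideanSpace ℝ (Fin n))) {s : ℝ}
    (hs : 0 ≤ s) {M : ℝ≥0∞} (hM0 : M ≠ 0) (hM : M ≠ ∞) (k₀ : ℕ) :
    ∑' p : maximalDenseCubes μ s M k₀, ediam (dyadicCube p.1.1 p.1.2) ^ s ≤
      n ^ s * M⁻¹ * μ univ := by
  have hcube : ∀ p : maximalDenseCubes μ s M k₀,
      ediam (dyadicCube p.1.1 p.1.2) ^ s ≤ n ^ s * M⁻¹ * μ (dyadicCube p.1.1 p.1.2) := fun p => by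
    refine (ediam_dyadicCube_rpow_le hs _ _).trans ?_
    rw [mul_assoc]
    gcongr
    rw [← ENNReal.div_eq_inv_mul, ENNReal.le_div_iff_mul_le (Or.inl hM0) (Or.inl hM), mul_comm]
    exact p.2.1.2.le
  refine (ENNReal.tsum_le_tsum hcube).trans ?_
  rw [ENNReal.tsum_mul_left, ← measure_biUnion (to_countable _)
    (pairwise_disjoint_maximalDenseCubes μ s M k₀) fun p _ => measurableSet_dyadicCube p.1 p.2]
  gcongr
  exact subset_univ _

lemma hausdorffMeasure_setOf_frequently_dense_le (μ : Measure (EuclideanSpace ℝ (Fin n))) {s : ℝ}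
    (hs : 0 ≤ s) {M : ℝ≥0∞} (hM0 : M ≠ 0) (hM : M ≠ ∞) :
    μH[s] {x | ∀ k₀, ∃ p ∈ denseCubes μ s M k₀, x ∈ dyadicCube p.1 p.2} ≤
      n ^ s * M⁻¹ * μ univ := by
  have hr : Filter.Tendsto (fun k₀ : ℕ => (n : ℝ≥0∞) * (2 : ℝ≥0∞)⁻¹ ^ k₀) Filter.atTop
      (nhds 0) := by
    rw [← mul_zero (n : ℝ≥0∞)]
    exact ENNReal.Tendsto.const_mul (ENNReal.tendsto_pow_atTop_nhds_zero_of_lt_one (by simp))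
      (Or.inr (ENNReal.natCast_ne_top n))
  refine (Measure.hausdorffMeasure_le_liminf_tsum s _ _ hr
    (fun k₀ (p : maximalDenseCubes μ s M k₀) => dyadicCube p.1.1 p.1.2)
    (.of_forall fun k₀ p => ?_) (.of_forall fun k₀ x hx => ?_)).trans
    (Filter.liminf_le_of_le (by isBoundedDefault) fun b hb => ?_)
  · refine (ediam_dyadicCube_le _ _).trans ?_
    exact mul_le_mul_right (pow_le_pow_right_of_le_one' (ENNReal.inv_le_one.2 one_le_two) p.2.1.1) _
  · obtain ⟨p, hp, hxp⟩ := exists_mem_maximalDenseCubes (hx k₀)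
    exact mem_iUnion.2 ⟨⟨p, hp⟩, hxp⟩
  · obtain ⟨k₀, hk⟩ := hb.exists
    exact hk.trans (tsum_ediam_maximalDenseCubes_le μ hs hM0 hM k₀)

/-- The points with `s`-dimensional `μ`-density at most `m + 1` in all dyadic cubes of generation at
least `m`. -/
def boundedDensityPoints (μ : Measure (EuclideanSpace ℝ (Fin n))) (s : ℝ) (m : ℕ) :
    Set (EuclideanSpace ℝ (Fin n)) :=
  {x | ∀ p ∈ denseCubes μ s (m + 1 : ℕ) m, x ∉ dyadicCube p.1 p.2}

lemma measurableSet_boundedDensityPoints (μ : Measure (EuclideanSpace ℝ (Fin n))) (s : ℝ)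
    (m : ℕ) : MeasurableSet (boundedDensityPoints μ s m) := by
  have hInter : boundedDensityPoints μ s m =
      ⋂ p ∈ denseCubes μ s (m + 1 : ℕ) m, (dyadicCube p.1 p.2)ᶜ := by
    ext x
    simp only [boundedDensityPoints, mem_ofPred_eq, mem_iInter, mem_compl_iff]
  rw [hInter]
  exact MeasurableSet.biInter (to_countable _) fun p _ => (measurableSet_dyadicCube _ _).compl

lemma hausdorffMeasure_compl_iUnion_boundedDensityPoints
    (μ : Measure (EuclideanSpace ℝ (Fin n))) [IsFiniteMeasure μ] {s : ℝ} (hs : 0 ≤ s) :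
    μH[s] (⋃ m, boundedDensityPoints μ s m)ᶜ = 0 := by
  have hbound : ∀ m : ℕ, μH[s] (⋃ m, boundedDensityPoints μ s m)ᶜ ≤
      n ^ s * μ univ * ((m + 1 : ℕ) : ℝ≥0∞)⁻¹ := fun m => by
    rw [mul_right_comm]
    refine (measure_mono fun x hx k₀ => ?_).trans (hausdorffMeasure_setOf_frequently_dense_le μ hs
      (by exact_mod_cast m.succ_ne_zero) (ENNReal.natCast_ne_top _))
    have hx' : x ∉ boundedDensityPoints μ s (max k₀ m) := fun h => hx (mem_iUnion.2 ⟨_, h⟩)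
    simp only [boundedDensityPoints, mem_ofPred_eq, not_forall, not_not] at hx'
    obtain ⟨p, ⟨hk, hlt⟩, hxp⟩ := hx'
    refine ⟨p, ⟨(le_max_left _ _).trans hk, lt_of_le_of_lt ?_ hlt⟩, hxp⟩
    gcongr
    exact le_max_right _ _
  refine le_antisymm (ge_of_tendsto' (x := Filter.atTop) ?_ hbound) zero_le
  have hlim := ENNReal.Tendsto.const_mul (a := n ^ s * μ univ)
    (ENNReal.tendsto_inv_nat_nhds_zero.comp (Filter.tendsto_add_atTop_nat 1))
    (Or.inr (by finiteness))
  rwa [mul_zero] at hlim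

lemma exists_measure_boundedDensityPoints_pos {μ : Measure (EuclideanSpace ℝ (Fin n))}
    [IsFiniteMeasure μ] {s : ℝ} (hs : 0 ≤ s) (hμ : μ ≠ 0) (hμs : μ ≪ μH[s]) :
    ∃ m, 0 < μ (boundedDensityPoints μ s m) := by
  refine exists_measure_pos_of_not_measure_iUnion_null fun hnull => hμ ?_
  rw [← Measure.measure_univ_eq_zero, ← union_compl_self (⋃ m, boundedDensityPoints μ s m)]
  exact measure_union_null hnull (hμs (hausdorffMeasure_compl_iUnion_boundedDensityPoints μ hs))

lemma exists_hasBallGrowth_restrict {μ : Measure (EuclideanSpace ℝ (Fin n))} [IsFiniteMeasure μ]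
    {s : ℝ} (hs : 0 ≤ s) {m : ℕ} {K : Set (EuclideanSpace ℝ (Fin n))}
    (hK : K ⊆ boundedDensityPoints μ s m) :
    ∃ C ≠ ∞, HasBallGrowth (μ.restrict K) s C := by
  set C : ℝ≥0∞ := (m + 1 : ℕ) + μ univ / dyadicWeight s m
  have hC : C ≠ ∞ := ENNReal.add_ne_top.2 ⟨ENNReal.natCast_ne_top _,
    ENNReal.div_ne_top (measure_ne_top _ _) (dyadicWeight_ne_zero s m)⟩
  refine ⟨3 ^ n * C, by finiteness, hasBallGrowth_of_forall_dyadicCube_le fun j w => ?_⟩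
  rw [add_mul]
  rcases le_or_gt m j with hj | hj
  · refine le_add_right ?_
    rcases (dyadicCube j w ∩ K).eq_empty_or_nonempty with hempty | ⟨x, hxw, hxK⟩
    · rw [Measure.restrict_apply (measurableSet_dyadicCube j w), hempty, measure_empty]
      exact zero_le
    · exact (Measure.restrict_apply_le _ _).trans
        (not_lt.1 fun hlt => hK hxK (j, w) ⟨hj, hlt⟩ hxw)
  · refine le_add_left ?_
    calc μ.restrict K (dyadicCube j w)
        ≤ μ univ := (Measure.restrict_apply_le _ _).trans (measure_mono (subset_univ _))
      _ = μ univ / dyadicWeight s m * dyadicWeight s m :=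
        (ENNReal.div_mul_cancel (dyadicWeight_ne_zero s m) (dyadicWeight_ne_top s m)).symm
      _ ≤ μ univ / dyadicWeight s m * dyadicWeight s j := by
        gcongr
        refine ENNReal.rpow_le_rpow_of_exponent_le one_le_two ?_
        gcongr

lemma exists_isCompact_hasBallGrowth_restrict {s : ℝ} (hs : 0 ≤ s)
    {A : Set (EuclideanSpace ℝ (Fin n))} (hA : MeasurableSet A) (h0 : 0 < μH[s] A)
    (h1 : μH[s] A < ∞) :
    ∃ K ⊆ A, IsCompact K ∧ 0 < μH[s] K ∧ ∃ C ≠ ∞, HasBallGrowth (μH[s].restrict K) s C := by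
  set μ : Measure (EuclideanSpace ℝ (Fin n)) := μH[s].restrict A with hμ
  have : IsFiniteMeasure μ := ⟨by rwa [hμ, Measure.restrict_apply_univ]⟩
  obtain ⟨m, hm⟩ := exists_measure_boundedDensityPoints_pos hs
    (Measure.restrict_eq_zero.not.2 h0.ne') Measure.absolutelyContinuous_restrict
  have hG := measurableSet_boundedDensityPoints μ s m
  have hGA : 0 < μ (boundedDensityPoints μ s m ∩ A) := by
    rwa [hμ, Measure.restrict_apply (hG.inter hA), inter_assoc, inter_self,
      ← Measure.restrict_apply hG]
  obtain ⟨K, hK, hKc, hKpos⟩ := (hG.inter hA).exists_lt_isCompact hGA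
  have hKA : K ⊆ A := hK.trans inter_subset_right
  refine ⟨K, hKA, hKc, hKpos.trans_le (Measure.restrict_apply_le _ _), ?_⟩
  rw [← Measure.restrict_restrict_of_subset hKA]
  exact exists_hasBallGrowth_restrict hs (hK.trans inter_subset_left)

end Density

/-! ### Upper bounds for the dimension of sections -/

section Upper

open ProbabilityTheory Filter

lemma exists_cover_of_hausdorffMeasure_lt {X : Type*} [EMetricSpace X] [MeasurableSpace X]
    [BorelSpace X] {s : ℝ} (hs : 0 < s) {A : Set X} {c : ℝ≥0∞} (h : μH[s] A < c) {r : ℝ≥0∞}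
    (hr : 0 < r) :
    ∃ t : ℕ → Set X, A ⊆ ⋃ i, t i ∧ (∀ i, ediam (t i) ≤ r) ∧ ∑' i, ediam (t i) ^ s < c := by
  rw [Measure.hausdorffMeasure_apply] at h
  have hinf := (le_iSup₂ (f := fun (r : ℝ≥0∞) (_ : 0 < r) => ⨅ (t : ℕ → Set X)
    (_ : A ⊆ ⋃ n, t n) (_ : ∀ n, ediam (t n) ≤ r), ∑' n, ⨆ _ : (t n).Nonempty, ediam (t n) ^ s)
    r hr).trans_lt h
  simp only [iInf_lt_iff] at hinf
  obtain ⟨t, hA, ht, hlt⟩ := hinf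
  refine ⟨t, hA, ht, lt_of_eq_of_lt (tsum_congr fun i => ?_) hlt⟩
  rcases (t i).eq_empty_or_nonempty with hempty | hne
  · simp [hempty, ENNReal.zero_rpow_of_pos hs]
  · simp [hne]

lemma exists_subset_closedBall_diam {X : Type*} [PseudoMetricSpace X] [Nonempty X] {t : Set X}
    (ht : ediam t ≠ ∞) : ∃ c, t ⊆ closedBall c (diam t) := by
  rcases t.eq_empty_or_nonempty with rfl | ⟨c, hc⟩
  · exact ⟨Classical.arbitrary X, empty_subset _⟩
  · exact ⟨c, fun x hx => dist_le_diam_of_mem (isBounded_iff_ediam_ne_top.2 ht) hx hc⟩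

variable {E : Type*} [NormedAddCommGroup E] [InnerProductSpace ℝ E]

/-- The hyperplane with normal vector `p.1` and height `p.2`. -/
def hyperplane (p : E × ℝ) : Set E := {y | ⟪y, p.1⟫ = p.2}

/-- The hyperplanes that meet the ball of centre `c` and radius `d`. -/
def hyperplanesMeeting (c : E) (d : ℝ) : Set (E × ℝ) := {p | |p.2 - ⟪c, p.1⟫| ≤ ‖p.1‖ * d}

lemma mem_hyperplanesMeeting {c y : E} {d : ℝ} {p : E × ℝ} (hyc : y ∈ closedBall c d)
    (hyp : y ∈ hyperplane p) : p ∈ hyperplanesMeeting c d := by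
  rw [hyperplanesMeeting, mem_ofPred_eq, ← show ⟪y, p.1⟫ = p.2 from hyp, ← inner_sub_left,
    mul_comm]
  refine (abs_real_inner_le_norm _ _).trans ?_
  gcongr
  rwa [← dist_eq_norm]

/-- The sum of `ediam (t i) ^ q` over the sets `t i` whose circumscribed ball, centred at `c i`,
meets the hyperplane `p`. -/
noncomputable def sectionCost (q : ℝ) (t : ℕ → Set E) (c : ℕ → E) (p : E × ℝ) : ℝ≥0∞ :=
  ∑' i, (hyperplanesMeeting (c i) (diam (t i))).indicator (fun _ => ediam (t i) ^ q) p

lemma hausdorffMeasure_inter_hyperplane_le_liminf [MeasurableSpace E] [BorelSpace E] {q : ℝ}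
    {A : Set E} {r : ℕ → ℝ≥0∞} (hr : Tendsto r atTop (nhds 0)) {t : ℕ → ℕ → Set E}
    (hA : ∀ k, A ⊆ ⋃ i, t k i) (htr : ∀ k i, ediam (t k i) ≤ r k) {c : ℕ → ℕ → E}
    (htc : ∀ k i, t k i ⊆ closedBall (c k i) (diam (t k i))) (p : E × ℝ) :
    μH[q] (A ∩ hyperplane p) ≤ liminf (fun k => sectionCost q (t k) (c k) p) atTop := by
  refine (Measure.hausdorffMeasure_le_liminf_tsum q _ r hr
    (fun k (i : {i | p ∈ hyperplanesMeeting (c k i) (diam (t k i))}) => t k i)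
    (.of_forall fun k i => htr k i) (.of_forall fun k y hy => ?_)).trans_eq ?_
  · obtain ⟨hyA, hyp⟩ := hy
    obtain ⟨i, hi⟩ := mem_iUnion.1 (hA k hyA)
    exact mem_iUnion.2 ⟨⟨i, mem_hyperplanesMeeting (htc k i hi) hyp⟩, hi⟩
  · congr 1
    ext k
    exact tsum_subtype {i | p ∈ hyperplanesMeeting (c k i) (diam (t k i))}
      fun i => ediam (t k i) ^ q

variable [MeasurableSpace E] [BorelSpace E] [SecondCountableTopology E]

lemma measurableSet_hyperplanesMeeting (c : E) (d : ℝ) :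
    MeasurableSet (hyperplanesMeeting c d) :=
  measurableSet_le (by fun_prop) (by fun_prop)

lemma measurable_sectionCost (q : ℝ) (t : ℕ → Set E) (c : ℕ → E) :
    Measurable (sectionCost q t c) :=
  Measurable.tsum fun _ => measurable_const.indicator (measurableSet_hyperplanesMeeting _ _)

lemma lintegral_sectionCost {q : ℝ} (hq : 0 ≤ q) {t : ℕ → Set E} (ht : ∀ i, ediam (t i) ≠ ∞)
    (c : ℕ → E) (e : E) :
    ∫⁻ u : ℝ, sectionCost q t c (e, u) = 2 * ‖e‖ₑ * ∑' i, ediam (t i) ^ (q + 1) := by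
  simp only [sectionCost]
  rw [← ENNReal.tsum_mul_left, lintegral_tsum (f := fun i u =>
    (hyperplanesMeeting (c i) (diam (t i))).indicator (fun _ => ediam (t i) ^ q) (e, u)) fun _ =>
      ((measurable_const.indicator (measurableSet_hyperplanesMeeting _ _)).comp
        measurable_prodMk_left).aemeasurable]
  refine tsum_congr fun i => ?_
  have hball : (fun u : ℝ => (e, u)) ⁻¹' hyperplanesMeeting (c i) (diam (t i)) =
      closedBall ⟪c i, e⟫ (‖e‖ * diam (t i)) := rfl
  calc ∫⁻ u : ℝ, (hyperplanesMeeting (c i) (diam (t i))).indicator (fun _ => ediam (t i) ^ q)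
          (e, u)
      = ∫⁻ u, ((fun u : ℝ => (e, u)) ⁻¹' hyperplanesMeeting (c i) (diam (t i))).indicator
          (fun _ => ediam (t i) ^ q) u := rfl
    _ = 2 * ‖e‖ₑ * (ediam (t i) ^ q * ediam (t i) ^ (1 : ℝ)) := by
      rw [hball, lintegral_indicator_const measurableSet_closedBall, Real.volume_closedBall,
        ENNReal.ofReal_mul (by norm_num), ENNReal.ofReal_mul (norm_nonneg e), ofReal_norm,
        diam, ENNReal.ofReal_toReal (ht i), ENNReal.ofReal_ofNat, ENNReal.rpow_one]
      ring
    _ = 2 * ‖e‖ₑ * ediam (t i) ^ (q + 1) := by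
      rw [← ENNReal.rpow_add_of_nonneg _ _ hq zero_le_one]

lemma ae_liminf_sectionCost_lt_top (γ : Measure E) {q : ℝ} (hq : 0 ≤ q)
    {t : ℕ → ℕ → Set E} (ht : ∀ k i, ediam (t k i) ≠ ∞) (c : ℕ → ℕ → E) {M : ℝ≥0∞} (hM : M ≠ ∞)
    (hsum : ∀ k, ∑' i, ediam (t k i) ^ (q + 1) ≤ M) :
    ∀ᵐ p ∂γ.prod (volume : Measure ℝ),
      liminf (fun k => sectionCost q (t k) (c k) p) atTop < ∞ := by
  have hmeas : Measurable fun p => liminf (fun k => sectionCost q (t k) (c k) p) atTop :=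
    .liminf fun k => measurable_sectionCost q (t k) (c k)
  rw [Measure.ae_prod_iff_ae_ae (measurableSet_lt hmeas measurable_const)]
  refine .of_forall fun e => ae_lt_top (hmeas.comp measurable_prodMk_left) ?_
  refine ne_top_of_le_ne_top (b := 2 * ‖e‖ₑ * M) (by finiteness) ((lintegral_liminf_le fun k =>
    (measurable_sectionCost q (t k) (c k)).comp measurable_prodMk_left).trans ?_)
  refine liminf_le_of_le (by isBoundedDefault) fun b hb => ?_
  obtain ⟨k, hk⟩ := hb.exists
  refine hk.trans ((lintegral_sectionCost hq (ht k) (c k) e).trans_le ?_)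
  gcongr
  exact hsum k

lemma ae_dimH_inter_hyperplane_le (γ : Measure E) {s : ℝ} (hs : 1 ≤ s) {A : Set E}
    (hA : μH[s] A ≠ ∞) :
    ∀ᵐ p ∂γ.prod (volume : Measure ℝ), dimH (A ∩ hyperplane p) ≤ ENNReal.ofReal (s - 1) := by
  set r : ℕ → ℝ≥0∞ := fun k => ((k + 1 : ℕ) : ℝ≥0∞)⁻¹
  have hr : Tendsto r atTop (nhds 0) :=
    ENNReal.tendsto_inv_nat_nhds_zero.comp (tendsto_add_atTop_nat 1)
  choose t hAt htr hsum using fun k => exists_cover_of_hausdorffMeasure_lt (r := r k)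
    (zero_lt_one.trans_le hs) (ENNReal.lt_add_right hA one_ne_zero)
    (ENNReal.inv_pos.2 (ENNReal.natCast_ne_top _))
  have ht : ∀ k i, ediam (t k i) ≠ ∞ := fun k i =>
    ne_top_of_le_ne_top (ENNReal.inv_ne_top.2 (Nat.cast_ne_zero.2 k.succ_ne_zero)) (htr k i)
  choose c hc using fun k i => exists_subset_closedBall_diam (ht k i)
  filter_upwards [ae_liminf_sectionCost_lt_top γ (sub_nonneg.2 hs) ht c
    (ENNReal.add_ne_top.2 ⟨hA, ENNReal.one_ne_top⟩)
    fun k => by rw [sub_add_cancel]; exact (hsum k).le] with p hp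
  refine dimH_le_of_hausdorffMeasure_ne_top (d := (s - 1).toNNReal)
    (ne_top_of_le_ne_top hp.ne ?_)
  rw [Real.coe_toNNReal _ (sub_nonneg.2 hs)]
  exact hausdorffMeasure_inter_hyperplane_le_liminf hr hAt htr hc p

end Upper

/-! ### Lower bounds for the dimension of sections -/

section Lower

open ProbabilityTheory Filter

lemma tsum_sqrt_mul_sqrt_le (a b : ℕ → ℝ≥0∞) :
    ∑' i, a i ^ (1 / 2 : ℝ) * b i ^ (1 / 2 : ℝ) ≤
      (∑' i, a i) ^ (1 / 2 : ℝ) * (∑' i, b i) ^ (1 / 2 : ℝ) := by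
  have hcount := ENNReal.lintegral_mul_le_Lp_mul_Lq (Measure.count : Measure ℕ)
    Real.HolderConjugate.two_two (f := fun i => a i ^ (1 / 2 : ℝ))
    (g := fun i => b i ^ (1 / 2 : ℝ)) (by fun_prop) (by fun_prop)
  simpa only [lintegral_count, Pi.mul_apply, ← ENNReal.rpow_mul, one_div,
    inv_mul_cancel₀ (two_ne_zero (α := ℝ)), ENNReal.rpow_one] using hcount

lemma exists_isOpen_superset_ediam_rpow_le {X : Type*} [PseudoEMetricSpace X] {τ : ℝ}
    (hτ : 0 ≤ τ) {t : Set X} (ht : ediam t ≠ ∞) {ε : ℝ≥0∞} (hε : ε ≠ 0) :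
    ∃ U, IsOpen U ∧ t ⊆ U ∧ ∃ d, d ≠ 0 ∧ d ≠ ∞ ∧ ediam U ≤ d ∧ d ^ τ ≤ ediam t ^ τ + ε := by
  have hcont : Continuous fun ρ : NNReal => (ediam t + 2 * (ρ : ℝ≥0∞)) ^ τ :=
    ENNReal.continuous_rpow_const.comp (continuous_const.add
      ((ENNReal.continuous_const_mul (by simp)).comp ENNReal.continuous_coe))
  have hlim : Tendsto (fun ρ : NNReal => (ediam t + 2 * (ρ : ℝ≥0∞)) ^ τ) (nhdsWithin 0 (Ioi 0))
      (nhds (ediam t ^ τ)) := by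
    simpa using (hcont.tendsto 0).mono_left nhdsWithin_le_nhds
  have hlt : ediam t ^ τ < ediam t ^ τ + ε :=
    ENNReal.lt_add_right (ENNReal.rpow_ne_top_of_nonneg hτ ht) hε
  obtain ⟨ρ, hρ, hρ0 : 0 < ρ⟩ :=
    ((hlim.eventually (gt_mem_nhds hlt)).and self_mem_nhdsWithin).exists
  exact ⟨thickening ρ t, isOpen_thickening, self_subset_thickening (by exact_mod_cast hρ0) _,
    ediam t + 2 * ρ, by simp [hρ0.ne'], by finiteness, ediam_thickening_le _, hρ.le⟩

lemma exists_isOpen_cover_of_hausdorffMeasure_eq_zero {X : Type*} [EMetricSpace X]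
    [MeasurableSpace X] [BorelSpace X] {τ : ℝ} (hτ : 0 < τ) {S : Set X} (h : μH[τ] S = 0)
    {ε : ℝ≥0∞} (hε : ε ≠ 0) :
    ∃ (U : ℕ → Set X) (d : ℕ → ℝ≥0∞), (∀ i, IsOpen (U i)) ∧ S ⊆ ⋃ i, U i ∧
      (∀ i, ediam (U i) ≤ d i) ∧ (∀ i, d i ≠ 0) ∧ (∀ i, d i ≠ ∞) ∧ ∑' i, d i ^ τ < ε := by
  have hε2 : ε / 2 ≠ 0 := (ENNReal.half_pos hε).ne'
  obtain ⟨t, hSt, htd, hts⟩ := exists_cover_of_hausdorffMeasure_lt hτ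
    (h.trans_lt (pos_iff_ne_zero.2 hε2)) one_pos
  obtain ⟨ε', hε'0, hε's⟩ := ENNReal.exists_pos_sum_of_countable' hε2 ℕ
  choose U hUo htU d hd0 hdt hUd hd using fun i => exists_isOpen_superset_ediam_rpow_le hτ.le
    (ne_top_of_le_ne_top ENNReal.one_ne_top (htd i)) (hε'0 i).ne'
  refine ⟨U, d, hUo, hSt.trans (iUnion_mono htU), hUd, hd0, hdt, ?_⟩
  calc _ ≤ ∑' i, (ediam (t i) ^ τ + ε' i) := ENNReal.tsum_le_tsum hd
    _ = _ := ENNReal.tsum_add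
    _ < ε / 2 + ε / 2 := ENNReal.add_lt_add hts hε's
    _ = ε := ENNReal.add_halves ε

lemma edist_rpow_neg_mul_inv {X : Type*} [PseudoMetricSpace X] {τ : ℝ} (hτ : 0 < τ) (x y : X) :
    edist x y ^ (-τ) * (edist x y)⁻¹ = edist x y ^ (-(τ + 1)) := by
  rcases eq_or_ne (edist x y) 0 with h | h
  · rw [h, ENNReal.zero_rpow_of_neg (by linarith), ENNReal.zero_rpow_of_neg (by linarith),
      ENNReal.inv_zero, ENNReal.top_mul_top]
  · rw [← ENNReal.rpow_neg_one, ← ENNReal.rpow_add _ _ h (edist_ne_top _ _), neg_add]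

lemma setLIntegral_le_sqrt_mul_sqrt {X : Type*} [PseudoEMetricSpace X] [MeasurableSpace X]
    [OpensMeasurableSpace X] [SecondCountableTopology X] (μ : Measure X) [SFinite μ] {τ : ℝ}
    (hτ : 0 ≤ τ) {f : X → ℝ≥0∞} (hf : Measurable f) {V : Set X} (hV : MeasurableSet V)
    {d : ℝ≥0∞} (hd : ediam V ≤ d) (hd0 : d ≠ 0) (hdtop : d ≠ ∞) :
    ∫⁻ y in V, f y ∂μ ≤ (d ^ τ) ^ (1 / 2 : ℝ) *
      (∫⁻ q in V ×ˢ V, f q.1 * f q.2 * edist q.1 q.2 ^ (-τ) ∂(μ.prod μ)) ^ (1 / 2 : ℝ) := by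
  rw [← ENNReal.mul_rpow_of_nonneg _ _ (by norm_num), one_div,
    ENNReal.le_rpow_inv_iff (by norm_num), ENNReal.rpow_two, sq,
    ← lintegral_prod_mul (by fun_prop) (by fun_prop), Measure.prod_restrict,
    ← lintegral_const_mul _ (by fun_prop)]
  refine setLIntegral_mono' (hV.prod hV) fun q hq => ?_
  have hdist : d ^ (-τ) ≤ edist q.1 q.2 ^ (-τ) := by
    rw [ENNReal.rpow_neg, ENNReal.rpow_neg, ENNReal.inv_le_inv]
    gcongr
    exact (edist_le_ediam_of_mem hq.1 hq.2).trans hd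
  calc f q.1 * f q.2 = f q.1 * f q.2 * (d ^ τ * d ^ (-τ)) := by
        rw [← ENNReal.rpow_add _ _ hd0 hdtop, add_neg_cancel, ENNReal.rpow_zero, mul_one]
    _ ≤ f q.1 * f q.2 * (d ^ τ * edist q.1 q.2 ^ (-τ)) := by gcongr
    _ = _ := by ring

lemma eventually_forall_lt_abs_sub_inner {E : Type*} [NormedAddCommGroup E]
    [InnerProductSpace ℝ E] {K U : Set E} (hK : IsCompact K) (hU : IsOpen U) {p : E × ℝ}
    (hKU : K ∩ hyperplane p ⊆ U) {δ : ℕ → ℝ} (hlim : Tendsto δ atTop (nhds 0)) :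
    ∀ᶠ k in atTop, ∀ y ∈ K \ U, δ k < |p.2 - ⟪y, p.1⟫| := by
  rcases (K \ U).eq_empty_or_nonempty with hempty | hne
  · simp [hempty]
  obtain ⟨y₀, hy₀, hmin⟩ := (hK.diff hU).exists_isMinOn hne
    (f := fun y => |p.2 - ⟪y, p.1⟫|) (by fun_prop)
  have hpos : 0 < |p.2 - ⟪y₀, p.1⟫| :=
    abs_pos.2 fun h => hy₀.2 (hKU ⟨hy₀.1, (sub_eq_zero.1 h).symm⟩)
  filter_upwards [hlim.eventually (gt_mem_nhds hpos)] with k hk y hy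
  exact hk.trans_le (hmin hy)

variable {E : Type*} [NormedAddCommGroup E] [InnerProductSpace ℝ E] [FiniteDimensional ℝ E]
  [MeasurableSpace E] [BorelSpace E]

/-- The Riesz energy of order `τ` of the normalized restriction of `μ` to the slab of width
`2 * δ` around the hyperplane `p`. -/
noncomputable def slabEnergy (μ : Measure E) (τ δ : ℝ) (p : E × ℝ) : ℝ≥0∞ :=
  ∫⁻ q, slabKernel δ (p.2 - ⟪q.1, p.1⟫) * slabKernel δ (p.2 - ⟪q.2, p.1⟫) *
    edist q.1 q.2 ^ (-τ) ∂(μ.prod μ)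

@[fun_prop]
lemma measurable_slabEnergy (μ : Measure E) [SFinite μ] (τ δ : ℝ) :
    Measurable (slabEnergy μ τ δ) := by
  unfold slabEnergy
  exact Measurable.lintegral_prod_right' (f := fun q : (E × ℝ) × (E × E) =>
    slabKernel δ (q.1.2 - ⟪q.2.1, q.1.1⟫) * slabKernel δ (q.1.2 - ⟪q.2.2, q.1.1⟫) *
    edist q.2.1 q.2.2 ^ (-τ)) (by fun_prop)

lemma lintegral_slabEnergy_le (μ : Measure E) [SFinite μ] {τ δ : ℝ} (hτ : 0 < τ) (hδ : 0 < δ) :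
    ∫⁻ p, slabEnergy μ τ δ p ∂hyperplaneMeasure E ≤ gaussianPeak * rieszEnergy (τ + 1) μ := by
  simp only [slabEnergy, rieszEnergy]
  rw [lintegral_slabKernel_mul_weight μ δ δ (w := fun q => edist q.1 q.2 ^ (-τ)) (by fun_prop),
    ← lintegral_const_mul _ (by fun_prop)]
  refine lintegral_mono fun q => ?_
  calc _ ≤ edist q.1 q.2 ^ (-τ) * (gaussianPeak * ‖q.1 - q.2‖ₑ⁻¹) := by
        gcongr; exact gaussianSlabPair_le hδ hδ _
    _ = gaussianPeak * edist q.1 q.2 ^ (-(τ + 1)) := by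
        rw [← edist_eq_enorm_sub, mul_left_comm, edist_rpow_neg_mul_inv hτ]

lemma ae_liminf_slabEnergy_lt_top (μ : Measure E) [SFinite μ] {τ : ℝ} (hτ : 0 < τ) {δ : ℕ → ℝ}
    (hδ : ∀ k, 0 < δ k) (h : rieszEnergy (τ + 1) μ ≠ ∞) :
    ∀ᵐ p ∂hyperplaneMeasure E, liminf (fun k => slabEnergy μ τ (δ k) p) atTop < ∞ := by
  refine ae_lt_top (Measurable.liminf fun k => by fun_prop) (ne_top_of_le_ne_top
    (ENNReal.mul_ne_top gaussianPeak_ne_top h) ?_)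
  refine (lintegral_liminf_le fun k => by fun_prop).trans
    (liminf_le_of_le (by isBoundedDefault) fun b hb => ?_)
  obtain ⟨k, hk⟩ := hb.exists
  exact hk.trans (lintegral_slabEnergy_le μ hτ (hδ k))

lemma slabDensity_le_sqrt_mul_sqrt (μ : Measure E) [SFinite μ] {τ : ℝ} (hτ : 0 ≤ τ)
    {U : ℕ → Set E} (hU : ∀ i, MeasurableSet (U i)) {d : ℕ → ℝ≥0∞} (hUd : ∀ i, ediam (U i) ≤ d i)
    (hd0 : ∀ i, d i ≠ 0) (hdtop : ∀ i, d i ≠ ∞) {δ : ℝ} {p : E × ℝ}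
    (hslab : ∀ᵐ y ∂μ, y ∉ ⋃ i, U i → δ < |p.2 - ⟪y, p.1⟫|) :
    slabDensity μ δ p ≤ (∑' i, d i ^ τ) ^ (1 / 2 : ℝ) * slabEnergy μ τ δ p ^ (1 / 2 : ℝ) := by
  set f : E → ℝ≥0∞ := fun y => slabKernel δ (p.2 - ⟪y, p.1⟫)
  have hV : ∀ i, MeasurableSet (disjointed U i) := fun i => MeasurableSet.disjointed hU i
  have hdisj : Pairwise (Function.onFun Disjoint (disjointed U)) := disjoint_disjointed U
  have hdensity : slabDensity μ δ p ≤ ∑' i, ∫⁻ y in disjointed U i, f y ∂μ := by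
    rw [← lintegral_iUnion hV hdisj, iUnion_disjointed, slabDensity,
      ← lintegral_indicator (MeasurableSet.iUnion hU)]
    refine lintegral_mono_ae ?_
    filter_upwards [hslab] with y hy
    by_cases hyU : y ∈ ⋃ i, U i
    · rw [indicator_of_mem hyU]
    · exact (slabKernel_eq_zero (hy hyU)).trans_le zero_le
  have henergy : ∑' i, ∫⁻ q in disjointed U i ×ˢ disjointed U i,
      f q.1 * f q.2 * edist q.1 q.2 ^ (-τ) ∂(μ.prod μ) ≤ slabEnergy μ τ δ p := by
    rw [← lintegral_iUnion (fun i => (hV i).prod (hV i))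
      fun i j hij => Set.disjoint_prod.2 (Or.inl (hdisj hij))]
    exact setLIntegral_le_lintegral _ _
  calc slabDensity μ δ p ≤ ∑' i, ∫⁻ y in disjointed U i, f y ∂μ := hdensity
    _ ≤ ∑' i, (d i ^ τ) ^ (1 / 2 : ℝ) * (∫⁻ q in disjointed U i ×ˢ disjointed U i,
          f q.1 * f q.2 * edist q.1 q.2 ^ (-τ) ∂(μ.prod μ)) ^ (1 / 2 : ℝ) :=
      ENNReal.tsum_le_tsum fun i => setLIntegral_le_sqrt_mul_sqrt μ hτ (by fun_prop) (hV i)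
        ((ediam_mono (disjointed_subset U i)).trans (hUd i)) (hd0 i) (hdtop i)
    _ ≤ _ := tsum_sqrt_mul_sqrt_le _ _
    _ ≤ _ := by gcongr

/- A cover of the section by small sets `U i` also covers the part of `K` in a thin slab, so
Cauchy–Schwarz on the pieces bounds the slab density by the sum of `ediam (U i) ^ τ` times the slab
energy. -/
lemma hausdorffMeasure_inter_hyperplane_ne_zero (μ : Measure E) [SFinite μ] {K : Set E}
    (hK : IsCompact K) (hμ : μ Kᶜ = 0) {τ : ℝ} (hτ : 0 < τ) {δ : ℕ → ℝ}
    (hlim : Tendsto δ atTop (nhds 0)) {p : E × ℝ} {M c : ℝ≥0∞} (hM : M ≠ ∞) (hc : c ≠ 0)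
    (hfreq : ∃ᶠ k in atTop, c ≤ slabDensity μ (δ k) p ∧ slabEnergy μ τ (δ k) p ≤ M) :
    μH[τ] (K ∩ hyperplane p) ≠ 0 := by
  intro hzero
  obtain ⟨ε, hε0, hε⟩ := ENNReal.exists_nnreal_pos_mul_lt hM (pow_ne_zero 2 hc)
  obtain ⟨U, d, hUo, hSU, hUd, hd0, hdt, hsum⟩ := exists_isOpen_cover_of_hausdorffMeasure_eq_zero
    hτ hzero (ε := ε) (by exact_mod_cast hε0.ne')
  obtain ⟨k, ⟨hck, hMk⟩, hk⟩ := (hfreq.and_eventually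
    (eventually_forall_lt_abs_sub_inner hK (isOpen_iUnion hUo) hSU hlim)).exists
  have hslab : ∀ᵐ y ∂μ, y ∉ ⋃ i, U i → δ k < |p.2 - ⟪y, p.1⟫| := by
    filter_upwards [measure_eq_zero_iff_ae_notMem.1 hμ] with y hy hyU
    exact hk y ⟨notMem_compl_iff.1 hy, hyU⟩
  have hle : c ≤ (ε * M : ℝ≥0∞) ^ (1 / 2 : ℝ) := by
    rw [ENNReal.mul_rpow_of_nonneg _ _ (by norm_num)]
    refine (hck.trans (slabDensity_le_sqrt_mul_sqrt μ hτ.le (fun i => (hUo i).measurableSet) hUd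
      hd0 hdt hslab)).trans ?_
    gcongr
  rw [one_div, ENNReal.le_rpow_inv_iff (by norm_num), ENNReal.rpow_two] at hle
  exact absurd hε (not_lt.2 hle)

end Lower

/-! ### Slab densities through typical points -/

section Convergence

open ProbabilityTheory Filter

lemma tsub_sq_add_two_mul_le {a b : ℝ≥0∞} (hb : b ≠ ∞) :
    (a - b) ^ 2 + 2 * (a * b) ≤ a * a + b * b := by
  rcases le_total a b with h | h
  · rw [tsub_eq_zero_of_le h]
    lift b to NNReal using hb
    lift a to NNReal using (h.trans_lt ENNReal.coe_lt_top).ne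
    norm_cast
    rw [← NNReal.coe_le_coe]
    push_cast
    nlinarith [sq_nonneg ((a : ℝ) - b)]
  · obtain ⟨c, rfl⟩ := exists_add_of_le h
    rw [ENNReal.add_sub_cancel_left hb]
    exact le_of_eq (by ring)

lemma le_succ_add_two_inv_pow_mul_sqrt_tsum (a : ℕ → ℝ≥0∞) (k : ℕ) :
    a k ≤ a (k + 1) + 2⁻¹ ^ k * (∑' j, 4 ^ j * (a j - a (j + 1)) ^ 2) ^ (1 / 2 : ℝ) := by
  refine tsub_le_iff_left.1 ?_
  have hfour : (4 : ℝ≥0∞) ^ k = (2 ^ k) ^ 2 := by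
    rw [← pow_mul, mul_comm, pow_mul]; norm_num
  have hterm : 2 ^ k * (a k - a (k + 1)) ≤
      (∑' j, 4 ^ j * (a j - a (j + 1)) ^ 2) ^ (1 / 2 : ℝ) := by
    rw [one_div, ENNReal.le_rpow_inv_iff (by norm_num), ENNReal.rpow_two, mul_pow, ← hfour]
    exact ENNReal.le_tsum (f := fun j => 4 ^ j * (a j - a (j + 1)) ^ 2) k
  rwa [← ENNReal.inv_pow, mul_comm, ← div_eq_mul_inv,
    ENNReal.le_div_iff_mul_le (by simp) (by simp), mul_comm]

lemma le_add_two_inv_pow_mul {a : ℕ → ℝ≥0∞} {g : ℝ≥0∞} (h : ∀ k, a k ≤ a (k + 1) + 2⁻¹ ^ k * g)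
    (k j : ℕ) : a k ≤ a (k + j) + 2⁻¹ ^ k * (2 * g) := by
  induction j generalizing k with
  | zero => simp
  | succ j ih =>
    have htwo : (2 : ℝ≥0∞)⁻¹ * 2 = 1 := ENNReal.inv_mul_cancel (by simp) (by simp)
    calc a k ≤ a (k + 1) + 2⁻¹ ^ k * g := h k
      _ ≤ a (k + 1 + j) + 2⁻¹ ^ (k + 1) * (2 * g) + 2⁻¹ ^ k * g := by gcongr; exact ih (k + 1)
      _ = a (k + (j + 1)) + 2⁻¹ ^ k * (2⁻¹ * 2 * g + g) := by
        rw [add_right_comm k 1 j]; ring_nf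
      _ = a (k + (j + 1)) + 2⁻¹ ^ k * (2 * g) := by rw [htwo]; ring

lemma le_two_inv_pow_mul_sqrt_tsum {a : ℕ → ℝ≥0∞} (ha : ∀ c ≠ 0, ∃ᶠ k in atTop, a k < c) (k : ℕ) :
    a k ≤ 2⁻¹ ^ k * (2 * (∑' j, 4 ^ j * (a j - a (j + 1)) ^ 2) ^ (1 / 2 : ℝ)) := by
  refine ENNReal.le_of_forall_pos_le_add fun ε hε _ => ?_
  obtain ⟨i, hi, hki⟩ := ((ha ε (by simpa using hε.ne')).and_eventually
    (eventually_ge_atTop k)).exists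
  obtain ⟨j, rfl⟩ := Nat.exists_eq_add_of_le hki
  rw [add_comm]
  exact (le_add_two_inv_pow_mul (le_succ_add_two_inv_pow_mul_sqrt_tsum a) k j).trans (by gcongr)

lemma slabDensity_ne_top {E : Type*} [NormedAddCommGroup E] [InnerProductSpace ℝ E]
    [MeasurableSpace E] (μ : Measure E) [IsFiniteMeasure μ] {δ : ℝ} (hδ : 0 < δ)
    (p : E × ℝ) : slabDensity μ δ p ≠ ∞ := by
  have hc : (ENNReal.ofReal (2 * δ))⁻¹ ≠ ∞ :=
    ENNReal.inv_ne_top.2 (ENNReal.ofReal_pos.2 (by positivity)).ne'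
  refine ne_top_of_le_ne_top (b := (ENNReal.ofReal (2 * δ))⁻¹ * μ univ) (by finiteness) ?_
  rw [← lintegral_const]
  exact lintegral_mono fun y => indicator_le_self' (fun _ _ => zero_le) _

lemma ae_fst_ne_snd_of_rieszEnergy_ne_top {X : Type*} [EMetricSpace X] [MeasurableSpace X]
    [OpensMeasurableSpace X] [SecondCountableTopology X] {μ : Measure X} {t : ℝ} (ht : 0 < t)
    (h : rieszEnergy t μ ≠ ∞) : ∀ᵐ q ∂μ.prod μ, q.1 ≠ q.2 := by
  filter_upwards [ae_lt_top (by fun_prop) h] with q hq heq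
  simp [heq, ENNReal.zero_rpow_of_neg (neg_neg_of_pos ht)] at hq

lemma measure_singleton_of_rieszEnergy_ne_top {X : Type*} [EMetricSpace X] [MeasurableSpace X]
    [OpensMeasurableSpace X] [SecondCountableTopology X] {μ : Measure X} [SFinite μ] {t : ℝ}
    (ht : 0 < t) (h : rieszEnergy t μ ≠ ∞) (x : X) : μ {x} = 0 := by
  have hdiag : (μ.prod μ) ({x} ×ˢ {x}) = 0 :=
    measure_mono_null (t := {q | ¬ q.1 ≠ q.2}) (fun q hq hne => hne (hq.1.trans (Eq.symm hq.2)))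
      (ae_iff.1 (ae_fst_ne_snd_of_rieszEnergy_ne_top ht h))
  rw [Measure.prod_prod] at hdiag
  exact mul_self_eq_zero.1 hdiag

lemma lintegral_gaussianPDF_ne_zero {E : Type*} [NormedAddCommGroup E] [MeasurableSpace E]
    [BorelSpace E] {μ : Measure E} (hμ : μ ≠ 0) {x : E} (hx : μ {x} = 0) (t : ℝ) :
    ∫⁻ y, gaussianPDF 0 (‖x - y‖₊ ^ 2) t ∂μ ≠ 0 := by
  have hmeas : Measurable fun y => gaussianPDF 0 (‖x - y‖₊ ^ 2) t :=
    (measurable_gaussianPDF_nnnorm_sq t).comp (measurable_id.const_sub x)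
  rw [Ne, lintegral_eq_zero_iff hmeas]
  refine fun hzero => hμ (ae_eq_bot.1 (eventually_false_iff_eq_bot.1 ?_))
  filter_upwards [measure_eq_zero_iff_ae_notMem.1 hx, hzero] with y hy h0
  exact (gaussianPDF_pos 0 (by simpa [sub_eq_zero] using Ne.symm hy) t).ne' h0

variable {E : Type*} [NormedAddCommGroup E] [InnerProductSpace ℝ E] [FiniteDimensional ℝ E]
  [MeasurableSpace E] [BorelSpace E]

lemma tendsto_lintegral_gaussianPDF {μ : Measure E} (hμ : rieszEnergy 1 μ ≠ ∞) :
    Tendsto (fun t => ∫⁻ q, gaussianPDF 0 (‖q.1 - q.2‖₊ ^ 2) t ∂(μ.prod μ)) (nhds 0)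
      (nhds (gaussianPeak * rieszEnergy 1 μ)) := by
  have hpeak : ∀ᵐ q ∂μ.prod μ, gaussianPDF 0 (‖q.1 - q.2‖₊ ^ 2) 0 =
      gaussianPeak * edist q.1 q.2 ^ (-1 : ℝ) := by
    filter_upwards [ae_fst_ne_snd_of_rieszEnergy_ne_top one_pos hμ] with q hq
    rw [gaussianPDF_zero_eq_gaussianPeak_mul (sub_ne_zero.2 hq), edist_eq_enorm_sub,
      ENNReal.rpow_neg_one]
  have hlint : ∫⁻ q, gaussianPDF 0 (‖q.1 - q.2‖₊ ^ 2) 0 ∂(μ.prod μ) =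
      gaussianPeak * rieszEnergy 1 μ := by
    rw [lintegral_congr_ae hpeak, lintegral_const_mul _ (by fun_prop), rieszEnergy]
  have hcont : ∀ v : NNReal, Continuous (gaussianPDF 0 v) := fun v =>
    ENNReal.continuous_ofReal.comp (by unfold gaussianPDFReal; fun_prop)
  rw [← hlint]
  refine tendsto_lintegral_filter_of_dominated_convergence _
    (.of_forall fun t => (measurable_gaussianPDF_nnnorm_sq t).comp (by fun_prop))
    (.of_forall fun t => .of_forall fun q => gaussianPDF_le_of_abs_le _ (by simp))
    (hlint.trans_ne (ENNReal.mul_ne_top gaussianPeak_ne_top hμ))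
    (.of_forall fun q => (hcont _).tendsto 0)

/- Two slab densities have nearly the same `L²` norm and nearly the same inner product, since all of
these are close to `gaussianPeak * rieszEnergy 1 μ` for thin slabs. -/
lemma lintegral_tsub_sq_slabDensity_le {μ : Measure E} [IsFiniteMeasure μ]
    (hμ : rieszEnergy 1 μ ≠ ∞) {δ δ' η : ℝ} (hδ : 0 < δ) (hδ' : 0 < δ') (h : δ + δ' ≤ η) :
    ∫⁻ p, (slabDensity μ δ p - slabDensity μ δ' p) ^ 2 ∂hyperplaneMeasure E ≤
      2 * (gaussianPeak * rieszEnergy 1 μ) -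
        2 * ∫⁻ q, gaussianPDF 0 (‖q.1 - q.2‖₊ ^ 2) η ∂(μ.prod μ) := by
  set L := gaussianPeak * rieszEnergy 1 μ
  have hL : L ≠ ∞ := ENNReal.mul_ne_top gaussianPeak_ne_top hμ
  have hinner : ∫⁻ q, gaussianPDF 0 (‖q.1 - q.2‖₊ ^ 2) η ∂(μ.prod μ) ≤
      ∫⁻ p, slabDensity μ δ p * slabDensity μ δ' p ∂hyperplaneMeasure E := by
    rw [lintegral_slabDensity_mul]
    refine lintegral_mono_ae ?_
    filter_upwards [ae_fst_ne_snd_of_rieszEnergy_ne_top one_pos hμ] with q hq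
      using le_gaussianSlabPair hδ hδ' h (sub_ne_zero.2 hq)
  refine ENNReal.le_sub_of_add_le_right (ENNReal.mul_ne_top (by simp) (ne_top_of_le_ne_top hL
    (hinner.trans (lintegral_slabDensity_mul_self_le μ hδ hδ')))) ?_
  calc _ ≤ ∫⁻ p, (slabDensity μ δ p - slabDensity μ δ' p) ^ 2 ∂hyperplaneMeasure E +
        2 * ∫⁻ p, slabDensity μ δ p * slabDensity μ δ' p ∂hyperplaneMeasure E := by
        gcongr
    _ = ∫⁻ p, (slabDensity μ δ p - slabDensity μ δ' p) ^ 2 +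
        2 * (slabDensity μ δ p * slabDensity μ δ' p) ∂hyperplaneMeasure E := by
        rw [← lintegral_const_mul _ (by fun_prop), ← lintegral_add_right _ (by fun_prop)]
    _ ≤ ∫⁻ p, slabDensity μ δ p * slabDensity μ δ p +
        slabDensity μ δ' p * slabDensity μ δ' p ∂hyperplaneMeasure E :=
        lintegral_mono fun p => tsub_sq_add_two_mul_le (slabDensity_ne_top μ hδ' p)
    _ ≤ L + L := by
        rw [lintegral_add_right _ (by fun_prop)]
        exact add_le_add (lintegral_slabDensity_mul_self_le μ hδ hδ)
          (lintegral_slabDensity_mul_self_le μ hδ' hδ')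
    _ = 2 * L := (two_mul L).symm

lemma exists_seq_lintegral_tsub_sq_slabDensity_le {μ : Measure E} [IsFiniteMeasure μ]
    (hμ : rieszEnergy 1 μ ≠ ∞) {ε : ℕ → ℝ≥0∞} (hε : ∀ k, ε k ≠ 0) :
    ∃ δ : ℕ → ℝ, (∀ k, 0 < δ k) ∧ (∀ k, δ k ≤ 1) ∧ Tendsto δ atTop (nhds 0) ∧
      ∀ k, ∫⁻ p, (slabDensity μ (δ k) p - slabDensity μ (δ (k + 1)) p) ^ 2
        ∂hyperplaneMeasure E ≤ ε k := by
  have hL : gaussianPeak * rieszEnergy 1 μ ≠ ∞ := ENNReal.mul_ne_top gaussianPeak_ne_top hμ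
  have hinv := tendsto_one_div_add_atTop_nhds_zero_nat (𝕜 := ℝ)
  have hη : Tendsto (fun N : ℕ => 2 * (1 / ((N : ℝ) + 1))) atTop (nhds 0) := by
    simpa using hinv.const_mul 2
  have hlim := ENNReal.Tendsto.sub
    (tendsto_const_nhds (x := 2 * (gaussianPeak * rieszEnergy 1 μ)))
    (ENNReal.Tendsto.const_mul (a := 2) ((tendsto_lintegral_gaussianPDF hμ).comp hη) (by simp))
    (Or.inl (by finiteness))
  rw [tsub_self] at hlim
  have hcauchy : ∀ k, ∀ᶠ N : ℕ in atTop, ∀ M : ℕ, N ≤ M →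
      ∫⁻ p, (slabDensity μ (1 / ((N : ℝ) + 1)) p - slabDensity μ (1 / ((M : ℝ) + 1)) p) ^ 2
        ∂hyperplaneMeasure E ≤ ε k := fun k => by
    filter_upwards [hlim.eventually_le_const (pos_iff_ne_zero.2 (hε k))] with N hN M hM
    refine (lintegral_tsub_sq_slabDensity_le hμ (by positivity) (by positivity) ?_).trans hN
    dsimp only
    rw [two_mul]
    gcongr
  obtain ⟨φ, hφ, hφε⟩ := extraction_forall_of_eventually hcauchy
  refine ⟨fun k => 1 / ((φ k : ℝ) + 1), fun k => by positivity, fun k => ?_,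
    hinv.comp hφ.tendsto_atTop, fun k => hφε k _ (hφ.monotone k.le_succ)⟩
  rw [div_le_one (by positivity)]
  simp

lemma lintegral_gaussianPDF_le_dualRadon_slabDensity (μ : Measure E) [SFinite μ] {x : E}
    (hx : μ {x} = 0) {δ η : ℝ} (hδ : 0 < δ) (hδη : δ ≤ η) :
    ∫⁻ y, gaussianPDF 0 (‖x - y‖₊ ^ 2) η ∂μ ≤ dualRadon (slabDensity μ δ) x := by
  have hswap : dualRadon (slabDensity μ δ) x =
      ∫⁻ y, ∫⁻ e, slabKernel δ ⟪x - y, e⟫ ∂(stdGaussian E) ∂μ := by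
    simp only [dualRadon, slabDensity, ← inner_sub_left]
    exact lintegral_lintegral_swap (by fun_prop)
  rw [hswap]
  refine lintegral_mono_ae ?_
  filter_upwards [measure_eq_zero_iff_ae_notMem.1 hx] with y hy
  have hxy : x - y ≠ 0 := fun h => hy (sub_eq_zero.1 h).symm
  rw [← lintegral_map (μ := stdGaussian E) (f := slabKernel δ)
    (g := fun e => ⟪x - y, e⟫) (by fun_prop) (by fun_prop), map_inner_stdGaussian,
    gaussianReal_of_var_ne_zero _ (by simpa using hxy),
    lintegral_withDensity_eq_lintegral_mul _ (by fun_prop) (by fun_prop)]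
  calc _ = ∫⁻ t, gaussianPDF 0 (‖x - y‖₊ ^ 2) η * slabKernel δ t := by
        rw [lintegral_const_mul _ (by fun_prop), lintegral_slabKernel hδ, mul_one]
    _ ≤ _ := by
        refine lintegral_mono fun t => ?_
        rcases le_or_gt |t| δ with ht | ht
        · exact mul_le_mul_left
            (gaussianPDF_le_of_abs_le _ ((ht.trans hδη).trans (le_abs_self η))) _
        · simp [slabKernel_eq_zero ht]

/-- A weighted square sum of the decrements of the slab densities along the widths `δ k`. Where it
is finite, slab densities that come arbitrarily close to zero tend to zero geometrically. -/
noncomputable def slabVariation (μ : Measure E) (δ : ℕ → ℝ) (p : E × ℝ) : ℝ≥0∞ :=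
  ∑' k, 4 ^ k * (slabDensity μ (δ k) p - slabDensity μ (δ (k + 1)) p) ^ 2

@[fun_prop]
lemma measurable_slabVariation (μ : Measure E) [SFinite μ] (δ : ℕ → ℝ) :
    Measurable (slabVariation μ δ) := by
  unfold slabVariation
  fun_prop

lemma exists_seq_lintegral_slabVariation_ne_top {μ : Measure E} [IsFiniteMeasure μ]
    (hμ : rieszEnergy 1 μ ≠ ∞) :
    ∃ δ : ℕ → ℝ, (∀ k, 0 < δ k) ∧ (∀ k, δ k ≤ 1) ∧ Tendsto δ atTop (nhds 0) ∧
      ∫⁻ p, slabVariation μ δ p ∂hyperplaneMeasure E ≠ ∞ := by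
  obtain ⟨δ, hδ0, hδ1, hδ, hdiff⟩ := exists_seq_lintegral_tsub_sq_slabDensity_le hμ
    (ε := fun k => (4⁻¹ * 2⁻¹) ^ k) (fun k => by simp)
  refine ⟨δ, hδ0, hδ1, hδ, ne_top_of_le_ne_top (b := ∑' k, 2⁻¹ ^ k) ?_ ?_⟩
  · rw [ENNReal.tsum_geometric]
    simp
  simp only [slabVariation]
  rw [lintegral_tsum (fun k => by fun_prop)]
  refine ENNReal.tsum_le_tsum fun k => ?_
  rw [lintegral_const_mul _ (by fun_prop)]
  refine (mul_le_mul_right (hdiff k) _).trans_eq ?_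
  rw [← mul_pow, ← mul_assoc, ENNReal.mul_inv_cancel (by simp) (by simp), one_mul]

lemma dualRadon_sqrt_slabVariation_eq_top {μ : Measure E} [SFinite μ] (hμ : μ ≠ 0) {x : E}
    (hx : μ {x} = 0) {δ : ℕ → ℝ} (hδ0 : ∀ k, 0 < δ k) (hδ1 : ∀ k, δ k ≤ 1)
    (hsmall : ∀ᵐ e ∂stdGaussian E, ∀ c ≠ 0,
      ∃ᶠ k in atTop, slabDensity μ (δ k) (e, ⟪x, e⟫) < c) :
    dualRadon (fun p => slabVariation μ δ p ^ (1 / 2 : ℝ)) x = ∞ := by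
  set g : E × ℝ → ℝ≥0∞ := fun p => slabVariation μ δ p ^ (1 / 2 : ℝ)
  have hg : Measurable g := by fun_prop
  by_contra htop
  have hle : ∀ k, ∫⁻ y, gaussianPDF 0 (‖x - y‖₊ ^ 2) 1 ∂μ ≤ 2⁻¹ ^ k * (2 * dualRadon g x) :=
      fun k => by
    refine (lintegral_gaussianPDF_le_dualRadon_slabDensity μ hx (hδ0 k) (hδ1 k)).trans ?_
    rw [dualRadon, dualRadon, ← lintegral_const_mul _ (by fun_prop),
      ← lintegral_const_mul _ (by fun_prop)]
    refine lintegral_mono_ae ?_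
    filter_upwards [hsmall] with e he using le_two_inv_pow_mul_sqrt_tsum he k
  refine lintegral_gaussianPDF_ne_zero hμ hx 1
    (le_antisymm (ge_of_tendsto' (x := atTop) ?_ hle) zero_le)
  simpa using ENNReal.Tendsto.mul_const (b := 2 * dualRadon g x)
    (ENNReal.tendsto_pow_atTop_nhds_zero_of_lt_one (r := 2⁻¹) (by simp))
    (Or.inr (by finiteness))

lemma exists_seq_dimH_setOf_ae_frequently_slabDensity_lt_le {μ : Measure E} [IsFiniteMeasure μ]
    (hμ : μ ≠ 0) (henergy : rieszEnergy 1 μ ≠ ∞) :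
    ∃ δ : ℕ → ℝ, (∀ k, 0 < δ k) ∧ Tendsto δ atTop (nhds 0) ∧
      dimH {x | ∀ᵐ e ∂stdGaussian E,
        ∀ c ≠ 0, ∃ᶠ k in atTop, slabDensity μ (δ k) (e, ⟪x, e⟫) < c} ≤ 1 := by
  obtain ⟨δ, hδ0, hδ1, hδ, hint⟩ := exists_seq_lintegral_slabVariation_ne_top henergy
  exact ⟨δ, hδ0, hδ, (dimH_mono fun x hx => dualRadon_sqrt_slabVariation_eq_top hμ
    (measure_singleton_of_rieszEnergy_ne_top one_pos henergy x) hδ0 hδ1 hx).trans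
    (dimH_setOf_dualRadon_sqrt_eq_top_le (measurable_slabVariation μ δ) hint)⟩

end Convergence

/-! ### Null sets of directions -/

section Directions

open ProbabilityTheory Filter

lemma gaussianReal_closedBall_le (a r : ℝ) :
    gaussianReal 0 1 (closedBall a r) ≤ ENNReal.ofReal (2 * r) := by
  rw [gaussianReal_apply 0 one_ne_zero, ← Real.volume_closedBall, ← setLIntegral_one]
  refine lintegral_mono fun t => ?_
  rw [gaussianPDF, gaussianPDFReal, ENNReal.ofReal_le_one]
  refine mul_le_one₀ (inv_le_one_of_one_le₀ ?_) (Real.exp_nonneg _) (Real.exp_le_one_iff.2 ?_)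
  · rw [Real.one_le_sqrt]
    simp only [NNReal.coe_one, mul_one]
    linarith [Real.pi_gt_three]
  · rw [neg_div, neg_nonpos]
    positivity

lemma stdGaussian_singleton_zero (E : Type*) [NormedAddCommGroup E] [InnerProductSpace ℝ E]
    [FiniteDimensional ℝ E] [MeasurableSpace E] [BorelSpace E] [Nontrivial E] :
    stdGaussian E {0} = 0 := by
  obtain ⟨z, hz⟩ := exists_ne (0 : E)
  have := nullSingletonClass_gaussianReal (μ := 0) (v := ‖z‖₊ ^ 2) (by simpa using hz)
  have hmap : (stdGaussian E).map (fun e => ⟪z, e⟫) {0} = 0 := by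
    rw [map_inner_stdGaussian, measure_singleton]
  rw [Measure.map_apply (by fun_prop) (measurableSet_singleton 0)] at hmap
  exact measure_mono_null (fun e he => by simp [mem_singleton_iff.1 he]) hmap

section Cone

variable {E : Type*} [NormedAddCommGroup E] [NormedSpace ℝ E]

/-- The part in the closed ball of radius `R` of the cone over the unit vectors of `t`. -/
def truncatedCone (R : ℝ) (t : Set E) : Set E :=
  image2 (· • ·) (Icc 0 R) (t ∩ sphere 0 1)

lemma mem_truncatedCone_of_inv_norm_smul_mem {R : ℝ} {t : Set E} {x : E} (hx : x ≠ 0)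
    (hR : ‖x‖ ≤ R) (ht : ‖x‖⁻¹ • x ∈ t) : x ∈ truncatedCone R t :=
  ⟨‖x‖, ⟨norm_nonneg x, hR⟩, ‖x‖⁻¹ • x,
    ⟨ht, mem_sphere_zero_iff_norm.2 (norm_smul_inv_norm (𝕜 := ℝ) hx)⟩,
    smul_inv_smul₀ (norm_ne_zero_iff.2 hx) x⟩

lemma truncatedCone_subset_iUnion_closedBall {R d : ℝ} (hR : 0 ≤ R) (hd : 0 < d) {t : Set E}
    (ht : ∀ u ∈ t, ∀ v ∈ t, dist u v ≤ d) {v : E} (hv : v ∈ t) (hv1 : ‖v‖ = 1) :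
    truncatedCone R t ⊆
      ⋃ k ∈ Finset.range (⌊R / d⌋₊ + 1), closedBall ((k * d : ℝ) • v) ((R + 1) * d) := by
  rintro _ ⟨r, ⟨hr0, hrR⟩, u, ⟨hu, -⟩, rfl⟩
  simp only [mem_iUnion, Finset.mem_range, mem_closedBall, exists_prop]
  refine ⟨⌊r / d⌋₊, Nat.lt_succ_of_le (Nat.floor_le_floor (by gcongr)), ?_⟩
  have hfloor_le : (⌊r / d⌋₊ : ℝ) * d ≤ r := (le_div_iff₀ hd).1 (Nat.floor_le (by positivity))
  have hlt_floor : r < (⌊r / d⌋₊ + 1 : ℝ) * d := (div_lt_iff₀ hd).1 (Nat.lt_floor_add_one _)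
  calc dist (r • u) ((⌊r / d⌋₊ * d : ℝ) • v)
      ≤ dist (r • u) (r • v) + dist (r • v) ((⌊r / d⌋₊ * d : ℝ) • v) := dist_triangle _ _ _
    _ = r * dist u v + (r - ⌊r / d⌋₊ * d) := by
        rw [dist_smul₀, dist_eq_norm (r • v), ← sub_smul, norm_smul, hv1, mul_one,
          Real.norm_of_nonneg hr0, Real.norm_of_nonneg (sub_nonneg.2 hfloor_le)]
    _ ≤ R * d + d := add_le_add (by gcongr; exact ht u hu v hv) (by linarith)
    _ = (R + 1) * d := by ring

end Cone

variable {n : ℕ}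

lemma stdGaussian_closedBall_le (x : EuclideanSpace ℝ (Fin n)) (r : ℝ) :
    stdGaussian (EuclideanSpace ℝ (Fin n)) (closedBall x r) ≤ ENNReal.ofReal (2 * r) ^ n := by
  rw [← map_pi_eq_stdGaussian, Measure.map_apply (by fun_prop) measurableSet_closedBall]
  calc _ ≤ (Measure.pi fun _ : Fin n => gaussianReal 0 1)
        (univ.pi fun i => closedBall (x i) r) := by
        refine measure_mono fun y hy i _ => ?_
        rw [mem_preimage, mem_closedBall, dist_eq_norm] at hy
        rw [mem_closedBall, dist_eq_norm]
        exact (PiLp.norm_apply_le (WithLp.toLp 2 y - x) i).trans hy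
    _ = ∏ i : Fin n, gaussianReal 0 1 (closedBall (x i) r) := Measure.pi_pi _ _
    _ ≤ ∏ _i : Fin n, ENNReal.ofReal (2 * r) :=
        Finset.prod_le_prod' fun i _ => gaussianReal_closedBall_le _ _
    _ = _ := by simp

lemma stdGaussian_truncatedCone_le {R d : ℝ} (hR : 0 ≤ R) (hd : 0 < d) (hd1 : d ≤ 1)
    {t : Set (EuclideanSpace ℝ (Fin n))} (ht : ∀ u ∈ t, ∀ v ∈ t, dist u v ≤ d) :
    stdGaussian (EuclideanSpace ℝ (Fin n)) (truncatedCone R t) ≤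
      ENNReal.ofReal ((R + 1) * (2 * (R + 1)) ^ n) * ENNReal.ofReal d ^ ((n : ℝ) - 1) := by
  rcases (t ∩ sphere 0 1).eq_empty_or_nonempty with hempty | ⟨v, hv, hv1⟩
  · simp [truncatedCone, hempty]
  set N := ⌊R / d⌋₊ + 1 with hN
  have hNd : (N : ℝ) ≤ (R + 1) * d⁻¹ := by
    have hfloor : (⌊R / d⌋₊ : ℝ) ≤ R / d := Nat.floor_le (by positivity)
    have hinv : 1 ≤ d⁻¹ := (one_le_inv₀ hd).2 hd1
    rw [hN, Nat.cast_add_one, add_mul, one_mul, ← div_eq_mul_inv]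
    exact add_le_add hfloor hinv
  calc _ ≤ ∑ k ∈ Finset.range N, stdGaussian (EuclideanSpace ℝ (Fin n))
          (closedBall ((k * d : ℝ) • v) ((R + 1) * d)) :=
        (measure_mono (truncatedCone_subset_iUnion_closedBall hR hd ht hv
          (mem_sphere_zero_iff_norm.1 hv1))).trans (measure_biUnion_finset_le _ _)
    _ ≤ ∑ _k ∈ Finset.range N, ENNReal.ofReal (2 * ((R + 1) * d)) ^ n :=
        Finset.sum_le_sum fun k _ => stdGaussian_closedBall_le _ _
    _ = ENNReal.ofReal (N * (2 * ((R + 1) * d)) ^ n) := by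
        rw [Finset.sum_const, Finset.card_range, nsmul_eq_mul,
          ENNReal.ofReal_mul N.cast_nonneg, ENNReal.ofReal_natCast,
          ENNReal.ofReal_pow (by positivity)]
    _ ≤ ENNReal.ofReal ((R + 1) * (2 * (R + 1)) ^ n * d ^ ((n : ℝ) - 1)) := by
        refine ENNReal.ofReal_le_ofReal ?_
        rw [Real.rpow_sub hd, Real.rpow_natCast, Real.rpow_one]
        calc _ ≤ (R + 1) * d⁻¹ * (2 * ((R + 1) * d)) ^ n := by gcongr
          _ = _ := by rw [mul_pow, mul_pow, mul_pow]; ring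
    _ = _ := by
        rw [ENNReal.ofReal_mul (by positivity), ← ENNReal.ofReal_rpow_of_pos hd]

lemma stdGaussian_truncatedCone_le_mul_of_hausdorffMeasure_eq_zero (hn : 2 ≤ n)
    {D : Set (EuclideanSpace ℝ (Fin n))} (hD : μH[(n : ℝ) - 1] D = 0) {R : ℝ} (hR : 0 ≤ R)
    {ε : ℝ≥0∞} (hε : ε ≠ 0) (hε1 : ε ≤ 1) :
    stdGaussian (EuclideanSpace ℝ (Fin n)) (truncatedCone R D) ≤
      ENNReal.ofReal ((R + 1) * (2 * (R + 1)) ^ n) * ε := by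
  have hτ : (0 : ℝ) < (n : ℝ) - 1 := sub_pos.2 (by exact_mod_cast hn)
  obtain ⟨U, d, -, hDU, hUd, hd0, hdt, hsum⟩ :=
    exists_isOpen_cover_of_hausdorffMeasure_eq_zero hτ hD hε
  have hd1 : ∀ i, d i ≤ 1 := fun i => by
    rw [← ENNReal.rpow_le_rpow_iff hτ, ENNReal.one_rpow]
    exact ((ENNReal.le_tsum i).trans hsum.le).trans hε1
  have hdist : ∀ i, ∀ u ∈ U i, ∀ v ∈ U i, dist u v ≤ (d i).toReal := fun i u hu v hv => by
    rw [dist_edist]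
    exact ENNReal.toReal_mono (hdt i) ((edist_le_ediam_of_mem hu hv).trans (hUd i))
  have hcone : truncatedCone R D ⊆ ⋃ i, truncatedCone R (U i) := by
    simp only [truncatedCone, ← image2_iUnion_right, ← iUnion_inter]
    gcongr
  calc _ ≤ ∑' i, stdGaussian (EuclideanSpace ℝ (Fin n)) (truncatedCone R (U i)) :=
        (measure_mono hcone).trans (measure_iUnion_le _)
    _ ≤ ∑' i, ENNReal.ofReal ((R + 1) * (2 * (R + 1)) ^ n) * d i ^ ((n : ℝ) - 1) := by
        refine ENNReal.tsum_le_tsum fun i => ?_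
        have hbound := stdGaussian_truncatedCone_le hR (ENNReal.toReal_pos (hd0 i) (hdt i))
          (ENNReal.toReal_le_of_le_ofReal zero_le_one (by simpa using hd1 i)) (hdist i)
        rwa [ENNReal.ofReal_toReal (hdt i)] at hbound
    _ ≤ _ := by
        rw [ENNReal.tsum_mul_left]
        gcongr

lemma stdGaussian_truncatedCone_eq_zero (hn : 2 ≤ n) {D : Set (EuclideanSpace ℝ (Fin n))}
    (hD : μH[(n : ℝ) - 1] D = 0) {R : ℝ} (hR : 0 ≤ R) :
    stdGaussian (EuclideanSpace ℝ (Fin n)) (truncatedCone R D) = 0 := by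
  refine le_antisymm (ge_of_tendsto' (x := atTop) ?_ fun k : ℕ =>
    stdGaussian_truncatedCone_le_mul_of_hausdorffMeasure_eq_zero hn hD hR
      (ε := 2⁻¹ ^ k) (by simp) (pow_le_one' (by simp) _)) zero_le
  simpa using ENNReal.Tendsto.const_mul
    (ENNReal.tendsto_pow_atTop_nhds_zero_of_lt_one (r := 2⁻¹) (by simp))
    (Or.inr ENNReal.ofReal_ne_top)

lemma ae_stdGaussian_inv_norm_smul_notMem (hn : 2 ≤ n) {D : Set (EuclideanSpace ℝ (Fin n))}
    (hD : μH[(n : ℝ) - 1] D = 0) :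
    ∀ᵐ e ∂stdGaussian (EuclideanSpace ℝ (Fin n)), e ≠ 0 ∧ ‖e‖⁻¹ • e ∉ D := by
  have : Nontrivial (Fin n) := Fin.nontrivial_iff_two_le.2 hn
  have hcone : ∀ᵐ e ∂stdGaussian (EuclideanSpace ℝ (Fin n)), ∀ k : ℕ, e ∉ truncatedCone k D :=
    ae_all_iff.2 fun k => measure_eq_zero_iff_ae_notMem.1
      (stdGaussian_truncatedCone_eq_zero hn hD k.cast_nonneg)
  filter_upwards [hcone, measure_eq_zero_iff_ae_notMem.1 (stdGaussian_singleton_zero _)]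
    with e he he0
  obtain ⟨k, hk⟩ := exists_nat_ge ‖e‖
  exact ⟨he0, fun hmem => he k (mem_truncatedCone_of_inv_norm_smul_mem he0 hk hmem)⟩

end Directions

/-! ### Hyperplane sections through typical points -/

section Main

open ProbabilityTheory Filter

lemma exists_measurableSet_superset_dimH_eq {X : Type*} [EMetricSpace X] [MeasurableSpace X]
    [BorelSpace X] (S : Set X) : ∃ B, S ⊆ B ∧ MeasurableSet B ∧ dimH B = dimH S := by
  rcases eq_or_ne (dimH S) ∞ with htop | htop
  · exact ⟨univ, subset_univ S, .univ, (top_unique (htop.ge.trans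
      (dimH_mono (subset_univ S)))).trans htop.symm⟩
  obtain ⟨d, hd⟩ := WithTop.ne_top_iff_exists.1 htop
  obtain ⟨u, -, hdu, hu⟩ := exists_seq_strictAnti_tendsto d
  have hSB : S ⊆ ⋂ j, toMeasurable μH[u j] S := subset_iInter fun j => subset_toMeasurable _ _
  refine ⟨⋂ j, toMeasurable μH[u j] S, hSB,
    MeasurableSet.iInter fun j => measurableSet_toMeasurable _ _, (dimH_mono hSB).antisymm' ?_⟩
  rw [← hd]
  refine ge_of_tendsto' (ENNReal.tendsto_coe.2 hu) fun j => dimH_le_of_hausdorffMeasure_ne_top ?_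
  have hnull : μH[u j] S = 0 :=
    hausdorffMeasure_of_dimH_lt (hd.symm.trans_lt (ENNReal.coe_lt_coe.2 (hdu j)))
  exact ne_top_of_le_ne_top ENNReal.zero_ne_top ((measure_mono (iInter_subset _ j)).trans_eq
    ((measure_toMeasurable S).trans hnull))

section Sections

variable {E : Type*} [NormedAddCommGroup E] [InnerProductSpace ℝ E]

lemma setOf_inner_sub_inv_norm_smul_eq_zero (x : E) {e : E} (he : e ≠ 0) :
    {y | ⟪y - x, ‖e‖⁻¹ • e⟫ = 0} = hyperplane (e, ⟪x, e⟫) := by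
  ext y
  simp [hyperplane, inner_smul_right, inner_sub_left, sub_eq_zero, he]

variable [FiniteDimensional ℝ E] [MeasurableSpace E] [BorelSpace E]

lemma le_dimH_inter_hyperplane (μ : Measure E) [SFinite μ] {K : Set E} (hK : IsCompact K)
    (hμ : μ Kᶜ = 0) {q : ℝ} {τ : ℕ → ℝ} (hτ0 : ∀ i, 0 < τ i) (hτ : Tendsto τ atTop (nhds q))
    {δ : ℕ → ℝ} (hδ : Tendsto δ atTop (nhds 0)) {p : E × ℝ}
    (hdensity : ¬ ∀ c ≠ 0, ∃ᶠ k in atTop, slabDensity μ (δ k) p < c)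
    (henergy : ∀ i, liminf (fun k => slabEnergy μ (τ i) (δ k) p) atTop < ∞) :
    ENNReal.ofReal q ≤ dimH (K ∩ hyperplane p) := by
  push Not at hdensity
  obtain ⟨c, hc0, hc⟩ := hdensity
  refine le_of_tendsto' (ENNReal.tendsto_ofReal hτ) fun i => ?_
  obtain ⟨M, hM, hMtop⟩ := exists_between (henergy i)
  have hfreq : ∃ᶠ k in atTop, slabEnergy μ (τ i) (δ k) p ≤ M :=
    (frequently_lt_of_liminf_lt (by isBoundedDefault) hM).mono fun k hk => hk.le
  refine le_dimH_of_hausdorffMeasure_ne_zero (d := (τ i).toNNReal) ?_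
  rw [Real.coe_toNNReal _ (hτ0 i).le]
  exact hausdorffMeasure_inter_hyperplane_ne_zero μ hK hμ (hτ0 i) hδ hMtop.ne hc0
    ((hfreq.and_eventually hc).mono fun k hk => hk.symm)

lemma dimH_setOf_ae_dimH_inter_hyperplane_ne_le_of_hasBallGrowth {s : ℝ} (hs : 1 < s) {A K : Set E}
    (hA : μH[s] A ≠ ∞) (hK : IsCompact K) (hKA : K ⊆ A) {μ : Measure E} [IsFiniteMeasure μ]
    (hμ : μ ≠ 0) (hμK : μ Kᶜ = 0) {C : ℝ≥0∞} (hC : C ≠ ∞) (hgrowth : HasBallGrowth μ s C) :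
    dimH {x | ∀ᵐ e ∂stdGaussian E,
      dimH (A ∩ hyperplane (e, ⟪x, e⟫)) ≠ ENNReal.ofReal (s - 1)} ≤ 1 := by
  obtain ⟨τ, -, hτs, hτ⟩ := exists_seq_strictMono_tendsto' (sub_pos.2 hs)
  obtain ⟨δ, hδ0, hδ, hthin⟩ := exists_seq_dimH_setOf_ae_frequently_slabDensity_lt_le hμ
    (hgrowth.rieszEnergy_ne_top hC zero_le_one hs)
  have henergy : ∀ᵐ p ∂hyperplaneMeasure E, ∀ i,
      liminf (fun k => slabEnergy μ (τ i) (δ k) p) atTop < ∞ :=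
    ae_all_iff.2 fun i => ae_liminf_slabEnergy_lt_top μ (hτs i).1 hδ0
      (hgrowth.rieszEnergy_ne_top hC (by linarith [(hτs i).1]) (by linarith [(hτs i).2]))
  have hgood : ∀ᵐ p ∂hyperplaneMeasure E, dimH (A ∩ hyperplane p) ≤ ENNReal.ofReal (s - 1) ∧
      ∀ i, liminf (fun k => slabEnergy μ (τ i) (δ k) p) atTop < ∞ :=
    (ae_dimH_inter_hyperplane_le (stdGaussian E) hs.le hA).and henergy
  refine (dimH_mono fun x hx => ?_).trans
    ((dimH_union _ _).trans_le (max_le hthin (dimH_setOf_not_ae_le hgood)))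
  refine or_iff_not_imp_right.2 fun hx_good => ?_
  filter_upwards [hx, not_not.1 hx_good] with e hne ⟨hupper, henergy_e⟩
  by_contra hdensity
  exact hne (hupper.antisymm ((le_dimH_inter_hyperplane μ hK hμK (fun i => (hτs i).1) hτ hδ
    hdensity henergy_e).trans (dimH_mono (inter_subset_inter_left _ hKA))))

end Sections

variable {n : ℕ}

lemma hausdorffMeasure_setOf_dimH_inter_eq_pos (hn : 2 ≤ n) {A : Set (EuclideanSpace ℝ (Fin n))}
    {x : EuclideanSpace ℝ (Fin n)} {d : ℝ≥0∞}
    (hx : ¬ ∀ᵐ e ∂stdGaussian (EuclideanSpace ℝ (Fin n)),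
      dimH (A ∩ hyperplane (e, ⟪x, e⟫)) ≠ d) :
    0 < μH[(n : ℝ) - 1] {e : EuclideanSpace ℝ (Fin n) | ‖e‖ = 1 ∧
      dimH (A ∩ {y | ⟪y - x, e⟫ = 0}) = d} := by
  refine pos_iff_ne_zero.2 fun hnull => hx ?_
  filter_upwards [ae_stdGaussian_inv_norm_smul_notMem hn hnull] with e ⟨he, hmem⟩ hdim
  refine hmem ⟨norm_smul_inv_norm (𝕜 := ℝ) he, ?_⟩
  rwa [setOf_inner_sub_inv_norm_smul_eq_zero x he]

lemma dimH_setOf_ae_dimH_inter_hyperplane_ne_le {s : ℝ} (hs : 1 < s)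
    {A : Set (EuclideanSpace ℝ (Fin n))} (hA : MeasurableSet A) (h0 : 0 < μH[s] A)
    (h1 : μH[s] A < ∞) :
    dimH {x | ∀ᵐ e ∂stdGaussian (EuclideanSpace ℝ (Fin n)),
      dimH (A ∩ hyperplane (e, ⟪x, e⟫)) ≠ ENNReal.ofReal (s - 1)} ≤ 1 := by
  obtain ⟨K, hKA, hK, hK0, C, hC, hgrowth⟩ :=
    exists_isCompact_hasBallGrowth_restrict (zero_le_one.trans hs.le) hA h0 h1
  have : IsFiniteMeasure (μH[s].restrict K) :=
    isFiniteMeasure_restrict.2 ((measure_mono hKA).trans_lt h1).ne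
  have hμK : μH[s].restrict K Kᶜ = 0 := by
    rw [Measure.restrict_apply hK.measurableSet.compl, compl_inter_self, measure_empty]
  exact dimH_setOf_ae_dimH_inter_hyperplane_ne_le_of_hasBallGrowth hs h1.ne hK hKA
    (Measure.restrict_eq_zero.not.2 hK0.ne') hμK hC hgrowth

end Main

theorem stmt_14 (n : ℕ) (hn : 2 ≤ n) (s : ℝ) (hs1 : 1 < s) (hs2 : s ≤ n)
    (A : Set (EuclideanSpace ℝ (Fin n))) (hA : MeasurableSet A)
    (h0 : 0 < μH[s] A) (h1 : μH[s] A < ∞) :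
    ∃ B : Set (EuclideanSpace ℝ (Fin n)), MeasurableSet B ∧
      dimH B ≤ 1 ∧
      ∀ x ∉ B, 0 < μH[(n : ℝ) - 1]
        {e : EuclideanSpace ℝ (Fin n) | ‖e‖ = 1 ∧
          dimH (A ∩ {y | ⟪y - x, e⟫ = 0}) = ENNReal.ofReal (s - 1)} := by
  obtain ⟨B, hB, hBm, hBdim⟩ := exists_measurableSet_superset_dimH_eq
    {x | ∀ᵐ e ∂ProbabilityTheory.stdGaussian (EuclideanSpace ℝ (Fin n)),
      dimH (A ∩ hyperplane (e, ⟪x, e⟫)) ≠ ENNReal.ofReal (s - 1)}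
  exact ⟨B, hBm, hBdim.trans_le
    (dimH_setOf_ae_dimH_inter_hyperplane_ne_le hs1 hA h0 h1),
    fun x hx => hausdorffMeasure_setOf_dimH_inter_eq_pos hn fun h => hx (hB h)⟩
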